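/- (Theorem F, Second Matricial Quaternionic Nullstellensatz) For any quaternionic matrix polynomials P₁, …, P_m, Q ∈ M_n(ℍ[x₁, …, x_d]) the following are equivalent: (1) for every a ∈ ℍ^d and every vector v ∈ ℍ^n such that P₁(a)v = ⋯ = P_m(a)v = 0, one has Q(a)v = 0; (2) Q belongs to every real left ideal of M_n(ℍ[x₁, …, x_d]) that contains P₁, …, P_m. -/

import Mathlib

local notation "ℍ" => Quaternion ℝ

/-- Auxiliary quaternion units. -/
def qI : ℍ := ⟨0,1,0,0⟩
def qJ : ℍ := ⟨0,0,1,0⟩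
def qK : ℍ := ⟨0,0,0,1⟩

lemma quat_star_add_star (q : ℍ) :
    star q + star q = -(q + qI * q * qI + qJ * q * qJ + qK * q * qK) := by
  ext <;>
    simp [Quaternion.re_mul, Quaternion.imI_mul, Quaternion.imJ_mul,
      Quaternion.imK_mul] <;>
    simp [qI, qJ, qK]

lemma quat_star_eq (q : ℍ) :
    star q = -(2⁻¹ : ℍ) * (q + qI * q * qI + qJ * q * qJ + qK * q * qK) := by
  have h : q + qI * q * qI + qJ * q * qJ + qK * q * qK = -(star q + star q) :=
    neg_eq_iff_eq_neg.mp (quat_star_add_star q).symm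
  rw [h, neg_mul, mul_neg, neg_neg, ← two_mul, ← mul_assoc,
    inv_mul_cancel₀ (by
      intro h2
      have h3 : (2 : Quaternion ℝ).re = (0 : Quaternion ℝ).re := congrArg QuaternionAlgebra.re h2
      have h4 : (2 : ℝ) = 0 := h3
      norm_num at h4 : (2:ℍ) ≠ 0), one_mul]

/-- The ring `ℍ[x₁,…,x_d]` of all polynomial functions from `ℍ^d` to `ℍ`: the subring of
the ring of all functions `ℍ^d → ℍ` generated by the constant functions and the coordinate
functions. -/
def HPoly (d : ℕ) : Subring ((Fin d → ℍ) → ℍ) :=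
  Subring.closure
    ((Set.range fun c : ℍ => Function.const (Fin d → ℍ) c) ∪
      (Set.range fun i : Fin d => fun a : Fin d → ℍ => a i))

lemma star_mem_HPoly {d : ℕ} {f : (Fin d → ℍ) → ℍ} (hf : f ∈ HPoly d) :
    star f ∈ HPoly d := by
  induction hf using Subring.closure_induction with
  | mem g hg =>
      rcases hg with ⟨c, rfl⟩ | ⟨i, rfl⟩
      · have : star (Function.const (Fin d → ℍ) c) = Function.const (Fin d → ℍ) (star c) :=
          funext fun a => rfl
        rw [this]
        exact Subring.subset_closure (Or.inl ⟨star c, rfl⟩)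
      · have hX : (fun a : Fin d → ℍ => a i) ∈ HPoly d :=
          Subring.subset_closure (Or.inr ⟨i, rfl⟩)
        have hC : ∀ c : ℍ, Function.const (Fin d → ℍ) c ∈ HPoly d := fun c =>
          Subring.subset_closure (Or.inl ⟨c, rfl⟩)
        have hstar : star (fun a : Fin d → ℍ => a i) =
            Function.const (Fin d → ℍ) (-(2⁻¹ : ℍ)) *
              ((fun a : Fin d → ℍ => a i) +
                Function.const (Fin d → ℍ) qI * (fun a : Fin d → ℍ => a i) *
                  Function.const (Fin d → ℍ) qI +
                Function.const (Fin d → ℍ) qJ * (fun a : Fin d → ℍ => a i) *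
                  Function.const (Fin d → ℍ) qJ +
                Function.const (Fin d → ℍ) qK * (fun a : Fin d → ℍ => a i) *
                  Function.const (Fin d → ℍ) qK) :=
          funext fun a => quat_star_eq (a i)
        rw [hstar]
        exact mul_mem (hC _)
          (add_mem (add_mem (add_mem hX (mul_mem (mul_mem (hC _) hX) (hC _)))
            (mul_mem (mul_mem (hC _) hX) (hC _))) (mul_mem (mul_mem (hC _) hX) (hC _)))
  | one => rw [star_one]; exact one_mem _
  | mul x y hx hy ihx ihy => rw [star_mul]; exact mul_mem ihy ihx
  | add x y hx hy ihx ihy => rw [star_add]; exact add_mem ihx ihy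
  | neg x hx ihx => rw [star_neg]; exact neg_mem ihx
  | zero => rw [star_zero]; exact zero_mem _

noncomputable instance HPoly.instStarRing (d : ℕ) : StarRing (HPoly d) where
  star x := ⟨star x.1, star_mem_HPoly x.2⟩
  star_involutive x := Subtype.ext (star_star x.1)
  star_mul x y := Subtype.ext (star_mul x.1 y.1)
  star_add x y := Subtype.ext (star_add x.1 y.1)

open Matrix

/-- A left ideal `I` of the matrix ring `Mₙ(A)` over a ring `A` with involution, equipped
with the conjugate-transpose involution `ᴴ`, is *real* if whenever
`(M 0)ᴴ * M 0 + ⋯ + (M (k-1))ᴴ * M (k-1) ∈ I`, each `M i` lies in `I`.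
(In Mathlib, `Ideal` means left ideal.) -/
def Ideal.IsRealLeftIdealH {A : Type*} [Ring A] [StarRing A] {n : ℕ}
    (I : Ideal (Matrix (Fin n) (Fin n) A)) : Prop :=
  ∀ (k : ℕ) (M : Fin k → Matrix (Fin n) (Fin n) A),
    (∑ i, (M i)ᴴ * M i) ∈ I → ∀ i, M i ∈ I

/-- Entrywise evaluation of a matrix of quaternionic polynomial functions at `a ∈ ℍ^d`. -/
def evalMatH {d n : ℕ} (a : Fin d → ℍ) (P : Matrix (Fin n) (Fin n) (HPoly d)) :
    Matrix (Fin n) (Fin n) ℍ :=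
  fun r s => (P r s : (Fin d → ℍ) → ℍ) a


section RealAlgebra
open Polynomial

/-- intermediate value property for polynomials -/
def PolyIVT (K : Type*) [Field K] [LinearOrder K] : Prop :=
  ∀ (p : K[X]) (a b : K), a < b → p.eval a * p.eval b < 0 → ∃ c, a < c ∧ c < b ∧ p.eval c = 0

lemma polyIVT_real : PolyIVT ℝ := by
  intro p a b hab h
  have hc : ContinuousOn (fun x => p.eval x) (Set.Icc a b) := p.continuous.continuousOn
  rcases mul_neg_iff.1 h with ⟨h1, h2⟩ | ⟨h1, h2⟩
  · obtain ⟨c, hc, h0⟩ := intermediate_value_Ioo' hab.le hc ⟨h2, h1⟩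
    exact ⟨c, hc.1, hc.2, h0⟩
  · obtain ⟨c, hc, h0⟩ := intermediate_value_Ioo hab.le hc ⟨h1, h2⟩
    exact ⟨c, hc.1, hc.2, h0⟩

section RCF
variable {K : Type*} [Field K] [LinearOrder K] [IsStrictOrderedRing K]

lemma rolle_aux (hK : PolyIVT K) (p : K[X]) (hp : p ≠ 0) (a b : K) (hab : a < b)
    (ha : p.eval a = 0) (hb : p.eval b = 0) (hno : ∀ x, a < x → x < b → p.eval x ≠ 0) :
    ∃ c, a < c ∧ c < b ∧ (derivative p).eval c = 0 := by
  obtain ⟨q1, hq1, hd1⟩ := Polynomial.exists_eq_pow_rootMultiplicity_mul_and_not_dvd p hp a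
  have hm : 0 < p.rootMultiplicity a := (rootMultiplicity_pos hp).2 ha
  generalize p.rootMultiplicity a = m at *
  obtain ⟨m, rfl⟩ : ∃ k, m = k + 1 := ⟨m - 1, by omega⟩
  have hq10 : q1 ≠ 0 := by rintro rfl; simp at hd1
  obtain ⟨q, hq, hd⟩ := Polynomial.exists_eq_pow_rootMultiplicity_mul_and_not_dvd q1 hq10 b
  have hq1b : q1.eval b = 0 := by
    rw [hq1] at hb
    simp only [eval_mul, eval_pow, eval_sub, eval_X, eval_C, mul_eq_zero] at hb
    rcases hb with hb | hb
    · exact absurd (pow_eq_zero_iff (by omega) |>.1 hb) (sub_ne_zero.2 hab.ne')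
    · exact hb
  have hk : 0 < q1.rootMultiplicity b := (rootMultiplicity_pos hq10).2 hq1b
  generalize q1.rootMultiplicity b = k at *
  obtain ⟨k, rfl⟩ : ∃ j, k = j + 1 := ⟨k - 1, by omega⟩
  have hqb : q.eval b ≠ 0 := fun h => hd (dvd_iff_isRoot.2 h)
  have hqa : q.eval a ≠ 0 := by
    intro h
    apply hd1
    rw [hq]
    exact Dvd.dvd.mul_left (dvd_iff_isRoot.2 h) _
  have hqs : ¬ (q.eval a * q.eval b < 0) := by
    intro h
    obtain ⟨c, h1, h2, h3⟩ := hK q a b hab h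
    exact hno c h1 h2 (by rw [hq1, hq]; simp [h3])
  have hqs' : 0 < q.eval a * q.eval b := lt_of_le_of_ne (not_lt.1 hqs) (mul_ne_zero hqa hqb).symm
  set g : K[X] := C ((m : K) + 1) * (X - C b) * q + C ((k : K) + 1) * (X - C a) * q
      + (X - C a) * (X - C b) * derivative q with hg
  have hder : derivative p = (X - C a) ^ m * (X - C b) ^ k * g := by
    rw [hq1, hq, hg]
    simp only [derivative_mul, derivative_pow, derivative_sub, derivative_X, derivative_C]
    simp
    ring
  have h1 : g.eval a = ((m : K) + 1) * (a - b) * q.eval a := by simp [hg]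
  have h2 : g.eval b = ((k : K) + 1) * (b - a) * q.eval b := by simp [hg]
  have h3 : g.eval a * g.eval b < 0 := by
    rw [h1, h2]
    have : 0 < ((m : K) + 1) * ((k : K) + 1) * (b - a) ^ 2 * (q.eval a * q.eval b) := by
      have := sub_pos.2 hab
      positivity
    linarith
  obtain ⟨c, hc1, hc2, hc3⟩ := hK g a b hab h3
  exact ⟨c, hc1, hc2, by rw [hder]; simp [hc3]⟩

lemma poly_rolle (hK : PolyIVT K) (p : K[X]) (a b : K) (hab : a < b)
    (ha : p.eval a = 0) (hb : p.eval b = 0) :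
    ∃ c, a < c ∧ c < b ∧ (derivative p).eval c = 0 := by
  by_cases hp : p = 0
  · obtain ⟨c, h1, h2⟩ := exists_between hab
    exact ⟨c, h1, h2, by simp [hp]⟩
  · set s := p.roots.toFinset.filter (fun x => a < x) with hs
    have hbs : b ∈ s := by simp [hs, hp, hb, hab]
    have hmem := s.min'_mem ⟨b, hbs⟩
    set b' := s.min' ⟨b, hbs⟩ with hb'
    have hle : b' ≤ b := s.min'_le b hbs
    have hm2 : p.eval b' = 0 ∧ a < b' := by simpa [hs, hp] using hmem
    obtain ⟨c, h1, h2, h3⟩ := rolle_aux hK p hp a b' hm2.2 ha hm2.1 (by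
      intro x hx1 hx2 h0
      have : x ∈ s := by simp [hs, hp, h0, hx1]
      exact absurd (s.min'_le x this) (not_le.2 hx2))
    exact ⟨c, h1, h2.trans_le hle, h3⟩

lemma poly_mvt (hK : PolyIVT K) (p : K[X]) (a b : K) (hab : a < b) :
    ∃ c, a < c ∧ c < b ∧ p.eval b - p.eval a = (derivative p).eval c * (b - a) := by
  have hba : b - a ≠ 0 := (sub_pos.2 hab).ne'
  obtain ⟨c, h1, h2, h3⟩ := poly_rolle hK
    (p - C (p.eval a) - C ((p.eval b - p.eval a) / (b - a)) * (X - C a)) a b hab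
    (by simp) (by simp; field_simp; ring)
  refine ⟨c, h1, h2, ?_⟩
  simp at h3
  rw [sub_eq_zero.1 h3]; field_simp

/-- behaviour on an interval on which the derivative has constant nonzero sign, and no sign change at ends -/
lemma interval_noroot (hK : PolyIVT K) (p : K[X]) (a b : K) (hab : a < b)
    (hd : ∀ x, a < x → x < b → (derivative p).eval x ≠ 0)
    (hs : ¬ (p.eval a * p.eval b < 0)) :
    ∀ x, a < x → x < b → SignType.sign (p.eval x) =
      if SignType.sign (p.eval a) = 0 then SignType.sign (p.eval b)
      else SignType.sign (p.eval a) := by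
  have key : ∀ y z, a ≤ y → z ≤ b → y < z → p.eval y ≠ p.eval z := by
    intro y z h1 h2 h3 h4
    obtain ⟨c, hc1, hc2, hc3⟩ := poly_mvt hK p y z h3
    have : (derivative p).eval c * (z - y) = 0 := by rw [← hc3, h4, sub_self]
    rcases mul_eq_zero.1 this with h | h
    · exact hd c (h1.trans_lt hc1) (hc2.trans_le h2) h
    · exact h3.ne' (sub_eq_zero.1 h)
  have hnr : ∀ x, a < x → x < b → p.eval x ≠ 0 := by
    intro x hx1 hx2 h0
    have hxa := key a x le_rfl hx2.le hx1
    have hxb := key x b hx1.le le_rfl hx2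
    rw [h0] at hxa hxb
    -- sign p a = sign p b ≠ 0
    have hpos : 0 < p.eval a * p.eval b :=
      lt_of_le_of_ne (not_lt.1 hs) (mul_ne_zero hxa hxb.symm).symm
    -- derivative sign
    obtain ⟨c, hc1, hc2, hc3⟩ := poly_mvt hK p a x hx1
    obtain ⟨e, he1, he2, he3⟩ := poly_mvt hK p x b hx2
    rw [h0] at hc3 he3
    have hce : (derivative p).eval c * (derivative p).eval e < 0 := by
      have h1 : 0 < (x - a) * (b - x) := mul_pos (sub_pos.2 hx1) (sub_pos.2 hx2)
      have h2 : (derivative p).eval c * (derivative p).eval e * ((x - a) * (b - x))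
          = - (p.eval a * p.eval b) := by
        calc _ = ((derivative p).eval c * (x - a)) * ((derivative p).eval e * (b - x)) := by ring
          _ = _ := by rw [← hc3, ← he3]; ring
      by_contra h
      have := mul_nonneg (not_lt.1 h) h1.le
      linarith
    obtain ⟨f, hf1, hf2, hf3⟩ := hK _ c e (hc2.trans he1) hce
    exact hd f (hc1.trans hf1) (hf2.trans he2) hf3
  have hnc : ∀ y z, a ≤ y → z ≤ b → y < z → ¬ (p.eval y * p.eval z < 0) := by
    intro y z h1 h2 h3 h4
    obtain ⟨c, hc1, hc2, hc3⟩ := hK p y z h3 h4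
    exact hnr c (h1.trans_lt hc1) (hc2.trans_le h2) hc3
  intro x hx1 hx2
  have hx0 := hnr x hx1 hx2
  split_ifs with h
  · have ha0 : p.eval a = 0 := sign_eq_zero_iff.1 h
    have hb0 : p.eval b ≠ 0 := by
      have := key a b le_rfl le_rfl hab
      rw [ha0] at this; exact this.symm
    have := hnc x b hx1.le le_rfl hx2
    rcases lt_or_gt_of_ne hx0 with h1 | h1 <;> rcases lt_or_gt_of_ne hb0 with h2 | h2
    · rw [sign_neg h1, sign_neg h2]
    · exact absurd (mul_neg_of_neg_of_pos h1 h2) this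
    · exact absurd (mul_neg_of_pos_of_neg h1 h2) this
    · rw [sign_pos h1, sign_pos h2]
  · have ha0 : p.eval a ≠ 0 := fun h' => h (by rw [h', sign_zero])
    have := hnc a x le_rfl hx2.le hx1
    rcases lt_or_gt_of_ne hx0 with h1 | h1 <;> rcases lt_or_gt_of_ne ha0 with h2 | h2
    · rw [sign_neg h1, sign_neg h2]
    · exact absurd (mul_neg_of_pos_of_neg h2 h1) this
    · exact absurd (mul_neg_of_neg_of_pos h2 h1) this
    · rw [sign_pos h1, sign_pos h2]

lemma interval_root (hK : PolyIVT K) (p : K[X]) (a b : K) (hab : a < b)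
    (hd : ∀ x, a < x → x < b → (derivative p).eval x ≠ 0)
    (hs : p.eval a * p.eval b < 0) :
    ∃ e, a < e ∧ e < b ∧ p.eval e = 0 ∧
      (∀ x, a < x → x < e → SignType.sign (p.eval x) = SignType.sign (p.eval a)) ∧
      (∀ x, e < x → x < b → SignType.sign (p.eval x) = SignType.sign (p.eval b)) := by
  obtain ⟨e, h1, h2, h3⟩ := hK p a b hab hs
  refine ⟨e, h1, h2, h3, ?_, ?_⟩
  · intro x hx1 hx2
    rw [interval_noroot hK p a e h1 (fun x h h' => hd x h (h'.trans h2)) (by simp [h3]) x hx1 hx2,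
      if_neg]
    rw [sign_eq_zero_iff]
    rintro h; simp [h] at hs
  · intro x hx1 hx2
    rw [interval_noroot hK p e b h2 (fun x h h' => hd x (h1.trans h) h') (by simp [h3]) x hx1 hx2,
      if_pos (by simp [h3])]

lemma small_bound (r : K[X]) (n : ℕ) (hn : r.degree < n) (ε : K) (hε : 0 < ε) :
    ∃ B : K, 1 ≤ B ∧ ∀ x, B ≤ |x| → |r.eval x| < ε * |x| ^ n := by
  by_cases hr : r = 0
  · refine ⟨1, le_rfl, fun x hx => ?_⟩
    have : 0 < |x| := one_pos.trans_le hx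
    simp only [hr, eval_zero, abs_zero]; positivity
  have hn' : r.natDegree < n := (natDegree_lt_iff_degree_lt hr).2 hn
  set s : K := ∑ i ∈ Finset.range n, |r.coeff i| with hs
  have hs0 : 0 ≤ s := Finset.sum_nonneg fun i _ => abs_nonneg _
  refine ⟨1 + s / ε, by have := div_nonneg hs0 hε.le; linarith, fun x hx => ?_⟩
  have hx1 : 1 ≤ |x| := le_trans (by have := div_nonneg hs0 hε.le; linarith) hx
  obtain ⟨k, rfl⟩ : ∃ k, n = k + 1 := ⟨n - 1, by omega⟩
  have h1 : |r.eval x| ≤ s * |x| ^ k := by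
    rw [eval_eq_sum_range' hn', hs, Finset.sum_mul]
    refine (Finset.abs_sum_le_sum_abs _ _).trans (Finset.sum_le_sum fun i hi => ?_)
    rw [abs_mul, abs_pow]
    have : i ≤ k := by have := Finset.mem_range.1 hi; omega
    gcongr
  have h2 : s < ε * |x| := by
    have : s / ε < |x| := by linarith
    rw [div_lt_iff₀ hε] at this
    linarith
  have h3 : 0 < |x| ^ k := pow_pos (one_pos.trans_le hx1) _
  calc |r.eval x| ≤ s * |x| ^ k := h1
    _ < ε * |x| * |x| ^ k := by gcongr
    _ = ε * |x| ^ (k + 1) := by ring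

lemma sign_add_of_abs_lt (u v : K) (h : |v| < |u|) : SignType.sign (u + v) = SignType.sign u := by
  rcases lt_trichotomy u 0 with hu | hu | hu
  · rw [sign_neg hu, sign_neg]
    rw [abs_of_neg hu] at h
    have := le_abs_self v
    linarith
  · subst hu; simp at h; exact absurd h (not_lt.2 (abs_nonneg v))
  · rw [sign_pos hu, sign_pos]
    rw [abs_of_pos hu] at h
    have := neg_abs_le v
    linarith

lemma sign_large (p : K[X]) (hp : p ≠ 0) : ∃ B : K, 1 ≤ B ∧
    (∀ x, B ≤ |x| → SignType.sign (p.eval x) =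
      SignType.sign p.leadingCoeff * SignType.sign x ^ p.natDegree) := by
  have hlc : 0 < |p.leadingCoeff| := abs_pos.2 (leadingCoeff_ne_zero.2 hp)
  obtain ⟨B, hB, h⟩ := small_bound p.eraseLead p.natDegree
    (by
      refine (degree_eraseLead_lt hp).trans_le ?_
      exact degree_le_natDegree) _ hlc
  refine ⟨B, hB, fun x hx => ?_⟩
  have h1 := h x hx
  have h2 : p.eval x = p.leadingCoeff * x ^ p.natDegree + p.eraseLead.eval x := by
    have := congrArg (eval x) (eraseLead_add_C_mul_X_pow p)
    rw [← this]
    simp only [eval_add, eval_mul, eval_C, eval_pow, eval_X]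
    ring
  rw [h2, sign_add_of_abs_lt, sign_mul, sign_pow]
  rw [abs_mul, abs_pow]; exact h1
end RCF

section Transfer
variable {A : Type*} [CommRing A]

lemma exists_prem (q : A[X]) (hq : 1 ≤ q.natDegree) : ∀ (n : ℕ) (p : A[X]), p.natDegree ≤ n →
    ∃ (e : ℕ) (u r : A[X]), C q.leadingCoeff ^ e * p = u * q + r ∧ r.natDegree < q.natDegree := by
  intro n
  induction n with
  | zero =>
    intro p hp
    exact ⟨0, 0, p, by simp, by omega⟩
  | succ n ih =>
    intro p hp
    by_cases h : p.natDegree < q.natDegree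
    · exact ⟨0, 0, p, by simp, h⟩
    · have h1 := natDegree_cancelLeads_lt_of_natDegree_le_natDegree (p := q) (q := p)
        (not_lt.1 h) (by omega)
      obtain ⟨e, u, r, h2, h3⟩ := ih (q.cancelLeads p) (by omega)
      have h4 : q.cancelLeads p = C q.leadingCoeff * p
          - C p.leadingCoeff * X ^ (p.natDegree - q.natDegree) * q := by
        have : q.natDegree - p.natDegree = 0 := by omega
        simp [cancelLeads, this]
      refine ⟨e + 1, u + C q.leadingCoeff ^ e * (C p.leadingCoeff * X ^ (p.natDegree - q.natDegree)),
        r, ?_, h3⟩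
      rw [h4] at h2
      linear_combination h2

lemma exists_prem_even (q : A[X]) (hq : 1 ≤ q.natDegree) (p : A[X]) :
    ∃ (r : A[X]), r.natDegree < q.natDegree ∧
      ∃ (e : ℕ) (u : A[X]), C q.leadingCoeff ^ (2 * e) * p = u * q + r := by
  obtain ⟨e, u, r, h1, h2⟩ := exists_prem q hq p.natDegree p le_rfl
  refine ⟨C (q.leadingCoeff ^ e) * r, (natDegree_C_mul_le _ _).trans_lt h2, e,
    C q.leadingCoeff ^ e * u, ?_⟩
  rw [C_pow]
  linear_combination C q.leadingCoeff ^ e * h1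

open Classical in
/-- pseudo-remainder -/
noncomputable def prem (p q : A[X]) : A[X] :=
  if hq : 1 ≤ q.natDegree then (exists_prem_even q hq p).choose else 0

lemma prem_degree (p q : A[X]) (hq : 1 ≤ q.natDegree) : (prem p q).natDegree < q.natDegree := by
  rw [prem, dif_pos hq]; exact (exists_prem_even q hq p).choose_spec.1

lemma prem_eq (p q : A[X]) (hq : 1 ≤ q.natDegree) :
    ∃ (e : ℕ) (u : A[X]), C q.leadingCoeff ^ (2 * e) * p = u * q + prem p q := by
  rw [prem, dif_pos hq]; exact (exists_prem_even q hq p).choose_spec.2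

/-- closedness for polynomials of degree at least `k`. -/
def ClosedFrom (k : ℕ) (U : Finset A[X]) : Prop :=
  ∀ q ∈ U, k ≤ q.natDegree → 1 ≤ q.natDegree →
    derivative q ∈ U ∧ q.eraseLead ∈ U ∧
      ∀ p ∈ U, q.natDegree ≤ p.natDegree → prem p q ∈ U

lemma natDegree_eraseLead_lt' (q : A[X]) (h : 1 ≤ q.natDegree) :
    q.eraseLead.natDegree < q.natDegree := by
  have := eraseLead_natDegree_le q
  omega

lemma exists_closed_aux (S : Finset A[X]) (n : ℕ) (hn : ∀ q ∈ S, q.natDegree < n) :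
    ∀ j, j ≤ n → ∃ U : Finset A[X], S ⊆ U ∧ ClosedFrom (n - j) U := by
  classical
  intro j
  induction j with
  | zero =>
    intro _
    refine ⟨S, subset_rfl, fun q hq h1 => ?_⟩
    have := hn q hq; omega
  | succ j ih =>
    intro hj
    obtain ⟨U, hSU, hU⟩ := ih (by omega)
    by_cases hk : n - (j + 1) = 0
    · refine ⟨U, hSU, fun q hq h1 h2 => hU q hq (by omega) h2⟩
    set k := n - (j + 1) with hkdef
    have hk1 : n - j = k + 1 := by omega
    rw [hk1] at hU
    set D := U.filter (fun q => q.natDegree = k) with hD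
    refine ⟨U ∪ D.image (fun q => derivative q) ∪ D.image (fun q => q.eraseLead) ∪
      (U ×ˢ D).image (fun pq => prem pq.1 pq.2), ?_, ?_⟩
    · intro x hx
      simp only [Finset.mem_union]
      exact Or.inl (Or.inl (Or.inl (hSU hx)))
    · have hlow : ∀ q, q ∈ U ∪ D.image (fun q => derivative q) ∪ D.image (fun q => q.eraseLead) ∪
          (U ×ˢ D).image (fun pq => prem pq.1 pq.2) → k ≤ q.natDegree → q ∈ U := by
        intro q hq hkq
        simp only [Finset.mem_union, Finset.mem_image, Finset.mem_product, hD,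
          Finset.mem_filter] at hq
        rcases hq with ((hq | ⟨q', ⟨h1, h2⟩, rfl⟩) | ⟨q', ⟨h1, h2⟩, rfl⟩) | ⟨⟨p, q'⟩, ⟨h0, h1, h2⟩, rfl⟩
        · exact hq
        · have := natDegree_derivative_lt (p := q') (by omega); omega
        · have := natDegree_eraseLead_lt' q' (by omega); omega
        · have := prem_degree p q' (by simp at h2; omega)
          simp at h2 hkq; omega
      intro q hq h1 h2
      have hqU := hlow q hq h1
      by_cases hqk : q.natDegree = k
      · have hqD : q ∈ D := by simp [hD, hqU, hqk]
        refine ⟨?_, ?_, fun p hp hpq => ?_⟩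
        · simp only [Finset.mem_union, Finset.mem_image]
          exact Or.inl (Or.inl (Or.inr ⟨q, hqD, rfl⟩))
        · simp only [Finset.mem_union, Finset.mem_image]
          exact Or.inl (Or.inr ⟨q, hqD, rfl⟩)
        · have hpU := hlow p hp (by omega)
          simp only [Finset.mem_union, Finset.mem_image]
          exact Or.inr ⟨(p, q), by simp [hpU, hqD], rfl⟩
      · obtain ⟨h3, h4, h5⟩ := hU q hqU (by omega) h2
        refine ⟨?_, ?_, fun p hp hpq => ?_⟩
        · simp only [Finset.mem_union]; exact Or.inl (Or.inl (Or.inl h3))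
        · simp only [Finset.mem_union]; exact Or.inl (Or.inl (Or.inl h4))
        · have hpU := hlow p hp (by omega)
          simp only [Finset.mem_union]; exact Or.inl (Or.inl (Or.inl (h5 p hpU hpq)))

lemma exists_closed (S : Finset A[X]) : ∃ U : Finset A[X], S ⊆ U ∧ ClosedFrom 0 U := by
  obtain ⟨U, h1, h2⟩ := exists_closed_aux S (S.sup natDegree + 1)
    (fun q hq => Nat.lt_succ_of_le (Finset.le_sup (f := natDegree) hq)) _ le_rfl
  exact ⟨U, h1, by simpa using h2⟩

variable {K : Type*} [Field K] [LinearOrder K] [IsStrictOrderedRing K]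
variable {L : Type*} [Field L] [LinearOrder L] [IsStrictOrderedRing L]

/-- sign of the specialised polynomial at a point -/
noncomputable def sg (φ : A →+* K) (q : A[X]) (x : K) : SignType := SignType.sign ((q.map φ).eval x)

/-- matching sign diagrams -/
inductive Sim (φ : A →+* K) (ψ : A →+* L) (F : Set A[X]) : K → K → L → L → Prop
  | single (a b : K) (a' b' : L) (h : a < b) (h' : a' < b')
      (hs : ∀ x y, a < x → x < b → a' < y → y < b' → ∀ q ∈ F, sg φ q x = sg ψ q y) :
      Sim φ ψ F a b a' b'
  | cons (a c b : K) (a' c' b' : L) (h1 : Sim φ ψ F a c a' c')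
      (hs : ∀ q ∈ F, sg φ q c = sg ψ q c')
      (hz : ∃ q ∈ F, (q.map φ).eval c = 0 ∧ φ q.leadingCoeff ≠ 0)
      (h2 : Sim φ ψ F c b c' b') : Sim φ ψ F a b a' b'

variable {φ : A →+* K} {ψ : A →+* L}

lemma Sim.lt {F : Set A[X]} {a b : K} {a' b' : L} (h : Sim φ ψ F a b a' b') : a < b ∧ a' < b' := by
  induction h with
  | single a b a' b' h h' hs => exact ⟨h, h'⟩
  | cons a c b a' c' b' h1 hs hz h2 ih1 ih2 => exact ⟨ih1.1.trans ih2.1, ih1.2.trans ih2.2⟩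

lemma Sim.exists_point {F : Set A[X]} {a b : K} {a' b' : L} (h : Sim φ ψ F a b a' b') :
    ∀ x, a < x → x < b → ∃ y, ∀ q ∈ F, sg φ q x = sg ψ q y := by
  induction h with
  | single a b a' b' h h' hs =>
    intro x h1 h2
    obtain ⟨y, h3, h4⟩ := exists_between h'
    exact ⟨y, hs x y h1 h2 h3 h4⟩
  | cons a c b a' c' b' h1 hs hz h2 ih1 ih2 =>
    intro x hx1 hx2
    rcases lt_trichotomy x c with h | h | h
    · exact ih1 x hx1 h
    · subst h; exact ⟨c', hs⟩
    · exact ih2 x h hx2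

/-- adding a polynomial whose sign agrees at all points where the signs of `F` agree -/
lemma Sim.insert_trivial {F : Set A[X]} {a b : K} {a' b' : L} (h : Sim φ ψ F a b a' b') (p : A[X])
    (hp : ∀ x y, (∀ q ∈ F, sg φ q x = sg ψ q y) → sg φ p x = sg ψ p y) :
    Sim φ ψ (insert p F) a b a' b' := by
  induction h with
  | single a b a' b' h h' hs =>
    refine Sim.single a b a' b' h h' fun x y h1 h2 h3 h4 q hq => ?_
    rcases hq with rfl | hq
    · exact hp x y (hs x y h1 h2 h3 h4)
    · exact hs x y h1 h2 h3 h4 q hq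
  | cons a c b a' c' b' h1 hs hz h2 ih1 ih2 =>
    refine Sim.cons a c b a' c' b' ih1 ?_ ?_ ih2
    · intro q hq
      rcases hq with rfl | hq
      · exact hp c c' hs
      · exact hs q hq
    · obtain ⟨q, hq, h⟩ := hz
      exact ⟨q, Or.inr hq, h⟩

lemma sg_mul_neg_iff (p : A[X]) (a b : K) :
    (p.map φ).eval a * (p.map φ).eval b < 0 ↔ sg φ p a * sg φ p b = -1 := by
  rw [sg, sg, ← sign_mul, sign_eq_neg_one_iff]

lemma Sim.insert_main (hK : PolyIVT K) (hL : PolyIVT L) {F : Set A[X]} {a b : K} {a' b' : L}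
    (h : Sim φ ψ F a b a' b') (p : A[X])
    (hlc : φ p.leadingCoeff ≠ 0) (hlc' : ψ p.leadingCoeff ≠ 0) (hdeg : 1 ≤ p.natDegree)
    (hder : derivative p ∈ F)
    (hdz : ∀ q ∈ F, φ q.leadingCoeff ≠ 0 → ψ q.leadingCoeff ≠ 0)
    (hrem : ∀ q ∈ F, φ q.leadingCoeff ≠ 0 → 1 ≤ q.natDegree → prem p q ∈ F)
    (ha : sg φ p a = sg ψ p a') (hb : sg φ p b = sg ψ p b') :
    Sim φ ψ (insert p F) a b a' b' := by
  induction h with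
  | single a b a' b' h h' hs =>
    have hmd : derivative (p.map φ) ≠ 0 := by
      intro h0
      have h1 := derivative_eq_zero.1 h0
      rw [natDegree_map_of_leadingCoeff_ne_zero φ hlc] at h1
      omega
    have hexz : ∃ x, a < x ∧ x < b ∧ (derivative (p.map φ)).eval x ≠ 0 := by
      by_contra hcon
      push Not at hcon
      apply hmd
      apply eq_zero_of_infinite_isRoot
      exact (Set.Ioo_infinite h).mono fun x hx => hcon x hx.1 hx.2
    obtain ⟨x0, hx1, hx2, hx3⟩ := hexz
    have hL0 : ∀ y, a' < y → y < b' → (derivative (p.map ψ)).eval y ≠ 0 := by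
      intro y h1 h2 h3
      have := hs x0 y hx1 hx2 h1 h2 _ hder
      rw [sg, sg, ← derivative_map, ← derivative_map, h3, sign_zero, sign_eq_zero_iff] at this
      exact hx3 this
    have hK0 : ∀ x, a < x → x < b → (derivative (p.map φ)).eval x ≠ 0 := by
      intro x h1 h2 h3
      obtain ⟨y, h4, h5⟩ := exists_between h'
      have := hs x y h1 h2 h4 h5 _ hder
      rw [sg, sg, ← derivative_map, ← derivative_map, h3, sign_zero, eq_comm,
        sign_eq_zero_iff] at this
      exact hL0 y h4 h5 this
    by_cases hsc : (p.map φ).eval a * (p.map φ).eval b < 0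
    · have hsc' : (p.map ψ).eval a' * (p.map ψ).eval b' < 0 := by
        rw [sg_mul_neg_iff] at hsc ⊢
        rw [← ha, ← hb, hsc]
      obtain ⟨e, e1, e2, e3, e4, e5⟩ := interval_root hK _ a b h hK0 hsc
      obtain ⟨e', e1', e2', e3', e4', e5'⟩ := interval_root hL _ a' b' h' hL0 hsc'
      refine Sim.cons a e b a' e' b' (Sim.single _ _ _ _ e1 e1' ?_) ?_
        ⟨p, Or.inl rfl, e3, hlc⟩ (Sim.single _ _ _ _ e2 e2' ?_)
      · intro x y h1 h2 h3 h4 q hq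
        rcases hq with rfl | hq
        · rw [sg, sg, e4 x h1 h2, e4' y h3 h4]; exact ha
        · exact hs x y h1 (h2.trans e2) h3 (h4.trans e2') q hq
      · intro q hq
        rcases hq with rfl | hq
        · rw [sg, sg, e3, e3', sign_zero, sign_zero]
        · exact hs e e' e1 e2 e1' e2' q hq
      · intro x y h1 h2 h3 h4 q hq
        rcases hq with rfl | hq
        · rw [sg, sg, e5 x h1 h2, e5' y h3 h4]; exact hb
        · exact hs x y (e1.trans h1) h2 (e1'.trans h3) h4 q hq
    · have hsc' : ¬ ((p.map ψ).eval a' * (p.map ψ).eval b' < 0) := by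
        rw [sg_mul_neg_iff] at hsc ⊢
        rw [← ha, ← hb]; exact hsc
      refine Sim.single _ _ _ _ h h' ?_
      intro x y h1 h2 h3 h4 q hq
      rcases hq with rfl | hq
      · rw [sg, sg, interval_noroot hK _ a b h hK0 hsc x h1 h2,
          interval_noroot hL _ a' b' h' hL0 hsc' y h3 h4]
        rw [sg, sg] at ha hb
        rw [ha, hb]
      · exact hs x y h1 h2 h3 h4 q hq
  | cons a c b a' c' b' h1 hs hz h2 ih1 ih2 =>
    have hc : sg φ p c = sg ψ p c' := by
      obtain ⟨q, hq, hq0, hql⟩ := hz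
      have hqd : 1 ≤ q.natDegree := by
        by_contra hcon
        have h0 : q.natDegree = 0 := by omega
        rw [eq_C_of_natDegree_eq_zero h0] at hq0
        rw [leadingCoeff, h0] at hql
        simp at hq0
        exact hql hq0
      have hq0' : (q.map ψ).eval c' = 0 := by
        have := hs q hq
        rw [sg, sg, hq0, sign_zero, eq_comm, sign_eq_zero_iff] at this
        exact this
      have hql' := hdz q hq hql
      obtain ⟨e, u, hu⟩ := prem_eq p q hqd
      have k1 := congrArg (fun f => (f.map φ).eval c) hu
      have k2 := congrArg (fun f => (f.map ψ).eval c') hu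
      simp only [Polynomial.map_mul, Polynomial.map_pow, map_C, Polynomial.map_add, eval_mul,
        eval_pow, eval_C, eval_add, hq0, hq0', mul_zero, zero_add] at k1 k2
      have k3 := hs _ (hrem q hq hql hqd)
      have k4 : 0 < φ q.leadingCoeff ^ (2 * e) := by rw [pow_mul]; positivity
      have k5 : 0 < ψ q.leadingCoeff ^ (2 * e) := by rw [pow_mul]; positivity
      rw [sg, sg, ← k1, ← k2, sign_mul, sign_mul, sign_pos k4, sign_pos k5, one_mul, one_mul] at k3
      exact k3
    refine Sim.cons a c b a' c' b' (ih1 ha hc) ?_ ?_ (ih2 hc hb)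
    · intro q hq
      rcases hq with rfl | hq
      · exact hc
      · exact hs q hq
    · obtain ⟨q, hq, h⟩ := hz
      exact ⟨q, Or.inr hq, h⟩

lemma map_eraseLead_of_eq_zero (φ : A →+* K) (q : A[X]) (h : φ q.leadingCoeff = 0) :
    q.eraseLead.map φ = q.map φ := by
  have := congrArg (Polynomial.map φ) (eraseLead_add_C_mul_X_pow q)
  rw [Polynomial.map_add, Polynomial.map_mul, Polynomial.map_C, h, C_0, zero_mul, add_zero] at this
  exact this

lemma exists_large (φ : A →+* K) (U : Finset A[X]) : ∃ B : K, 1 ≤ B ∧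
    ∀ q ∈ U, φ q.leadingCoeff ≠ 0 → ∀ x, B ≤ |x| →
      sg φ q x = SignType.sign (φ q.leadingCoeff) * SignType.sign x ^ q.natDegree := by
  classical
  induction U using Finset.induction_on with
  | empty => exact ⟨1, le_rfl, by simp⟩
  | insert p U hp ih =>
    obtain ⟨B, hB, h⟩ := ih
    by_cases hl : φ p.leadingCoeff = 0
    · refine ⟨B, hB, fun q hq hq0 => ?_⟩
      rcases Finset.mem_insert.1 hq with rfl | hq
      · exact absurd hl hq0
      · exact h q hq hq0
    · obtain ⟨B', hB', h'⟩ := sign_large (p.map φ) (by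
        intro h0
        have := leadingCoeff_map_of_leadingCoeff_ne_zero φ hl
        rw [h0] at this; simp at this; exact hl (by rw [← this]))
      refine ⟨max B B', hB.trans (le_max_left _ _), fun q hq hq0 x hx => ?_⟩
      rcases Finset.mem_insert.1 hq with rfl | hq
      · rw [sg, h' x ((le_max_right _ _).trans hx), leadingCoeff_map_of_leadingCoeff_ne_zero φ hl,
          natDegree_map_of_leadingCoeff_ne_zero φ hl]
      · exact h q hq hq0 x ((le_max_left _ _).trans hx)

lemma transfer_closed (hK : PolyIVT K) (hL : PolyIVT L) (U : Finset A[X]) (hU : ClosedFrom 0 U)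
    (hs : ∀ q ∈ U, SignType.sign (φ q.leadingCoeff) = SignType.sign (ψ q.leadingCoeff)) (x : K) :
    ∃ y : L, ∀ q ∈ U, sg φ q x = sg ψ q y := by
  classical
  have hz : ∀ q ∈ U, (φ q.leadingCoeff = 0 ↔ ψ q.leadingCoeff = 0) := by
    intro q hq
    rw [← sign_eq_zero_iff, hs q hq, sign_eq_zero_iff]
  obtain ⟨B, hB1, hB⟩ := exists_large φ U
  obtain ⟨B', hB1', hB'⟩ := exists_large ψ U
  have hB0 : 0 < B := one_pos.trans_le hB1
  have hB0' : 0 < B' := one_pos.trans_le hB1'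
  have hconst : ∀ q : A[X], q ∈ U → q.natDegree = 0 → ∀ x y, sg φ q x = sg ψ q y := by
    intro q hq h0 x y
    have h1 := hs q hq
    rw [leadingCoeff, h0] at h1
    rw [sg, sg, eq_C_of_natDegree_eq_zero h0]
    simpa using h1
  have hfar : ∀ (n : ℕ) (q : A[X]), q ∈ U → q.natDegree ≤ n → ∀ x y, B ≤ |x| → B' ≤ |y| →
      SignType.sign x = SignType.sign y → sg φ q x = sg ψ q y := by
    intro n
    induction n with
    | zero => intro q hq h0 x y _ _ _; exact hconst q hq (by omega) x y
    | succ n ih =>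
      intro q hq hqn x y hx hy hxy
      by_cases h0 : q.natDegree = 0
      · exact hconst q hq h0 x y
      by_cases hl : φ q.leadingCoeff = 0
      · have h1 : q.eraseLead ∈ U := (hU q hq (by omega) (by omega)).2.1
        have h2 := natDegree_eraseLead_lt' q (by omega)
        have h3 := ih _ h1 (by omega) x y hx hy hxy
        rwa [sg, sg, map_eraseLead_of_eq_zero φ q hl,
          map_eraseLead_of_eq_zero ψ q ((hz q hq).1 hl)] at h3
      · rw [hB q hq hl x hx, hB' q hq (fun h => hl ((hz q hq).2 h)) y hy, hs q hq, hxy]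
  have hsim : ∀ F : Finset A[X], (F ⊆ U) → (∀ p ∈ F, ∀ q ∈ U, q.natDegree < p.natDegree → q ∈ F) →
      Sim φ ψ (F : Set A[X]) (-B) B (-B') B' := by
    intro F
    induction F using Finset.induction_on_max_value (fun q : A[X] => q.natDegree) with
    | empty =>
      intro _ _
      exact Sim.single _ _ _ _ (by linarith) (by linarith) (by simp)
    | insert p F hpF hmax ih =>
      intro hFU hdc
      have hlow : ∀ q ∈ U, q.natDegree < p.natDegree → q ∈ F := by
        intro q hq hlt
        rcases Finset.mem_insert.1 (hdc p (Finset.mem_insert_self _ _) q hq hlt) with rfl | h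
        · omega
        · exact h
      have hFU' : F ⊆ U := fun q hq => hFU (Finset.mem_insert_of_mem hq)
      have hpU : p ∈ U := hFU (Finset.mem_insert_self _ _)
      have ih' := ih hFU' (by
        intro p' hp' q hq hlt
        exact hlow q hq (hlt.trans_le (hmax p' hp')))
      rw [Finset.coe_insert]
      by_cases h0 : p.natDegree = 0
      · exact ih'.insert_trivial p fun x y _ => hconst p hpU h0 x y
      by_cases hl : φ p.leadingCoeff = 0
      · have h1 : p.eraseLead ∈ F := hlow _ (hU p hpU (by omega) (by omega)).2.1
          (natDegree_eraseLead_lt' p (by omega))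
        refine ih'.insert_trivial p fun x y h => ?_
        have h3 := h _ h1
        rwa [sg, sg, map_eraseLead_of_eq_zero φ p hl,
          map_eraseLead_of_eq_zero ψ p ((hz p hpU).1 hl)] at h3
      · refine ih'.insert_main hK hL p hl (fun h => hl ((hz p hpU).2 h)) (by omega)
          (hlow _ (hU p hpU (by omega) (by omega)).1 (natDegree_derivative_lt (by omega)))
          (fun q hq hq0 h => hq0 ((hz q (hFU' hq)).2 h)) ?_ ?_ ?_
        · intro q hq hq0 hqd
          have := hmax q hq
          refine hlow _ ((hU q (hFU' hq) (by omega) hqd).2.2 p hpU this) ?_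
          exact (prem_degree p q hqd).trans_le this
        · refine hfar _ p hpU le_rfl _ _ ?_ ?_ ?_
          · rw [abs_neg, abs_of_pos hB0]
          · rw [abs_neg, abs_of_pos hB0']
          · rw [sign_neg (by linarith), sign_neg (by linarith)]
        · refine hfar _ p hpU le_rfl _ _ ?_ ?_ ?_
          · rw [abs_of_pos hB0]
          · rw [abs_of_pos hB0']
          · rw [sign_pos hB0, sign_pos hB0']
  by_cases hx : B ≤ |x|
  · rcases lt_trichotomy x 0 with h | h | h
    · refine ⟨-B', fun q hq => hfar _ q hq le_rfl _ _ hx ?_ ?_⟩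
      · rw [abs_neg, abs_of_pos hB0']
      · rw [sign_neg h, sign_neg (by linarith)]
    · subst h; simp at hx; exact absurd hx (not_le.2 hB0)
    · refine ⟨B', fun q hq => hfar _ q hq le_rfl _ _ hx ?_ ?_⟩
      · rw [abs_of_pos hB0']
      · rw [sign_pos h, sign_pos hB0']
  · obtain ⟨h1, h2⟩ := abs_lt.1 (not_le.1 hx)
    exact (hsim U subset_rfl (fun p _ q hq _ => hq)).exists_point x h1 h2

end Transfer

lemma sign_ringHom {K : Type*} [Field K] [LinearOrder K] [IsStrictOrderedRing K] (j : ℝ →+* K)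
    (c : ℝ) : SignType.sign (j c) = SignType.sign c := by
  have hpos : ∀ c : ℝ, 0 < c → 0 < j c := by
    intro c hc
    have h1 : j c = j (Real.sqrt c) ^ 2 := by rw [← map_pow, Real.sq_sqrt hc.le]
    have h2 : j c ≠ 0 := (map_ne_zero j).2 hc.ne'
    rw [h1] at h2 ⊢
    exact lt_of_le_of_ne (sq_nonneg _) h2.symm
  rcases lt_trichotomy c 0 with h | h | h
  · have := hpos (-c) (by linarith)
    rw [map_neg] at this
    rw [sign_neg h, sign_neg (by linarith)]
  · simp [h]
  · rw [sign_pos h, sign_pos (hpos c h)]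

lemma eval₂_finSucc {K : Type*} [Field K] (j : ℝ →+* K) {n : ℕ} (b : Fin (n + 1) → K)
    (s : MvPolynomial (Fin (n + 1)) ℝ) :
    MvPolynomial.eval₂ j b s = Polynomial.eval (b 0)
      (Polynomial.map (MvPolynomial.eval₂Hom j (fun i => b i.succ))
        (MvPolynomial.finSuccEquiv ℝ n s)) := by
  induction s using MvPolynomial.induction_on with
  | C r =>
    rw [MvPolynomial.eval₂_C, ← MvPolynomial.algebraMap_eq, AlgEquiv.commutes,
      Polynomial.algebraMap_apply]
    simp [MvPolynomial.algebraMap_eq]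
  | add p q hp hq => rw [MvPolynomial.eval₂_add, hp, hq, map_add, Polynomial.map_add, eval_add]
  | mul_X p i hp =>
    rw [MvPolynomial.eval₂_mul, hp, map_mul, Polynomial.map_mul, eval_mul, MvPolynomial.eval₂_X]
    congr 1
    refine Fin.cases ?_ (fun i => ?_) i
    · rw [MvPolynomial.finSuccEquiv_X_zero]; simp
    · rw [MvPolynomial.finSuccEquiv_X_succ]; simp

theorem artin_lang {K : Type*} [Field K] [LinearOrder K] [IsStrictOrderedRing K] (hK : PolyIVT K)
    (j : ℝ →+* K) : ∀ (n : ℕ) (S : Finset (MvPolynomial (Fin n) ℝ)) (b : Fin n → K),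
    ∃ a : Fin n → ℝ, ∀ s ∈ S, SignType.sign (MvPolynomial.eval₂ j b s) =
      SignType.sign (MvPolynomial.eval a s) := by
  classical
  intro n
  induction n with
  | zero =>
    intro S b
    refine ⟨Fin.elim0, fun s _ => ?_⟩
    obtain ⟨c, rfl⟩ := MvPolynomial.C_surjective (R := ℝ) (Fin 0) s
    simp [sign_ringHom]
  | succ n ih =>
    intro S b
    obtain ⟨U, hSU, hU⟩ := exists_closed (A := MvPolynomial (Fin n) ℝ)
      (S.image (fun s => MvPolynomial.finSuccEquiv ℝ n s))
    obtain ⟨a, ha⟩ := ih (U.image (fun q => q.leadingCoeff)) (fun i => b i.succ)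
    have hs : ∀ q ∈ U, SignType.sign
        (MvPolynomial.eval₂Hom j (fun i : Fin n => b i.succ) q.leadingCoeff) =
        SignType.sign (MvPolynomial.eval a q.leadingCoeff) := by
      intro q hq
      exact ha _ (Finset.mem_image.2 ⟨q, hq, rfl⟩)
    have key := transfer_closed (φ := MvPolynomial.eval₂Hom j (fun i : Fin n => b i.succ))
      (ψ := MvPolynomial.eval a) hK polyIVT_real U hU hs
    obtain ⟨y, hy⟩ := key (b 0)
    refine ⟨Fin.cons y a, fun s hs => ?_⟩
    have h1 := hy _ (hSU (Finset.mem_image_of_mem _ hs))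
    rw [sg, sg, ← MvPolynomial.eval_eq_eval_mv_eval'] at h1
    rw [← h1]
    congr 1
    exact eval₂_finSucc j b s

section RealClosure

/-- sum of squares of a list -/
def lsq {R : Type*} [Semiring R] (l : List R) : R := (l.map (fun x => x ^ 2)).sum

lemma lsq_map {R S : Type*} [Semiring R] [Semiring S] (f : R →+* S) (l : List R) :
    f (lsq l) = lsq (l.map f) := by
  induction l with
  | nil => simp [lsq]
  | cons a l ih => simp [lsq] at ih ⊢; rw [ih]

lemma lsq_append {R : Type*} [Semiring R] (l l' : List R) : lsq (l ++ l') = lsq l + lsq l' := by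
  simp [lsq]

lemma lsq_mul_sq {R : Type*} [CommSemiring R] (l : List R) (c : R) :
    c ^ 2 * lsq l = lsq (l.map (c * ·)) := by
  induction l with
  | nil => simp [lsq]
  | cons a l ih => simp [lsq] at ih ⊢; rw [mul_add, ih]; ring

lemma lsq_mul_lsq {R : Type*} [CommSemiring R] (l l' : List R) : ∃ l'' : List R,
    lsq l * lsq l' = lsq l'' := by
  induction l with
  | nil => exact ⟨[], by simp [lsq]⟩
  | cons a l ih =>
    obtain ⟨m, hm⟩ := ih
    refine ⟨l'.map (a * ·) ++ m, ?_⟩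
    rw [lsq_append, ← hm, ← lsq_mul_sq]
    simp [lsq, add_mul]

/-- `-1` is not a sum of squares -/
def FReal (F : Type*) [Field F] : Prop := ∀ l : List F, lsq l ≠ -1

/-- maximal formally real, in polynomial form -/
def MaxReal (K : Type*) [Field K] : Prop :=
  FReal K ∧ ∀ p : K[X], Irreducible p → p.natDegree ≠ 1 → ∃ l : List K[X], p ∣ 1 + lsq l

theorem exists_maxReal (F : Type) [Field F] (hF : FReal F) :
    ∃ (K : Type) (_ : Field K) (_ : F →+* K), MaxReal K := by
  let Ω := AlgebraicClosure F
  let s : Set (IntermediateField F Ω) := {E | ∀ l : List Ω, (∀ x ∈ l, x ∈ E) → lsq l ≠ -1}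
  have hbot : (⊥ : IntermediateField F Ω) ∈ s := by
    intro l hl h
    have : ∃ l' : List F, l'.map (algebraMap F Ω) = l := by
      clear h
      induction l with
      | nil => exact ⟨[], rfl⟩
      | cons a l ih =>
        obtain ⟨l', hl'⟩ := ih fun x hx => hl x (List.mem_cons_of_mem _ hx)
        obtain ⟨a', ha'⟩ := IntermediateField.mem_bot.1 (hl a List.mem_cons_self)
        exact ⟨a' :: l', by simp [ha', hl']⟩
    obtain ⟨l', rfl⟩ := this
    rw [← lsq_map] at h
    apply hF l'
    apply (algebraMap F Ω).injective
    rw [h]; simp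
  obtain ⟨E, -, hE⟩ := zorn_le_nonempty₀ s (by
    intro c hc hchain y hy
    haveI : Nonempty c := ⟨⟨y, hy⟩⟩
    have hdir : Directed (· ≤ ·) (fun i : c => (i : IntermediateField F Ω)) :=
      hchain.directed
    refine ⟨⨆ i : c, (i : IntermediateField F Ω), ?_, fun z hz => le_iSup (fun i : c => (i : IntermediateField F Ω)) ⟨z, hz⟩⟩
    intro l hl
    have : ∃ i : c, ∀ x ∈ l, x ∈ (i : IntermediateField F Ω) := by
      induction l with
      | nil => exact ⟨⟨y, hy⟩, by simp⟩
      | cons a l ih =>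
        obtain ⟨i, hi⟩ := ih fun x hx => hl x (List.mem_cons_of_mem _ hx)
        have ha : a ∈ ((⨆ i : c, (i : IntermediateField F Ω) : IntermediateField F Ω) : Set Ω) :=
          hl a List.mem_cons_self
        rw [IntermediateField.coe_iSup_of_directed hdir] at ha
        obtain ⟨k, hk⟩ := Set.mem_iUnion.1 ha
        obtain ⟨m, h1, h2⟩ := hdir i k
        refine ⟨m, fun x hx => ?_⟩
        rcases List.mem_cons.1 hx with rfl | hx
        · exact h2 hk
        · exact h1 (hi x hx)
    obtain ⟨i, hi⟩ := this
    exact hc i.2 l hi) ⊥ hbot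
  refine ⟨E, inferInstance, algebraMap F E, ?_, ?_⟩
  · intro l h
    have h1 := congrArg (algebraMap E Ω) h
    rw [lsq_map] at h1
    refine hE.1 (l.map (algebraMap E Ω)) ?_ (by rw [h1]; simp)
    intro x hx
    obtain ⟨y, -, rfl⟩ := List.mem_map.1 hx
    exact y.2
  · intro p hp hdeg
    haveI : IsAlgClosed Ω := inferInstanceAs (IsAlgClosed (AlgebraicClosure F))
    obtain ⟨θ, hθ⟩ := IsAlgClosed.exists_aeval_eq_zero Ω p (degree_pos_of_irreducible hp).ne'
    have hnot : θ ∉ E := by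
      intro h
      have h1 : p.eval (⟨θ, h⟩ : E) = 0 := by
        apply (algebraMap E Ω).injective
        rw [map_zero, ← hθ, ← aeval_algebraMap_apply_eq_algebraMap_eval]
        rfl
      exact hdeg (natDegree_eq_of_degree_eq_some (degree_eq_one_of_irreducible_of_root hp h1))
    let E' : IntermediateField F Ω := (IntermediateField.adjoin E {θ}).restrictScalars F
    have hθE' : θ ∈ E' := IntermediateField.mem_adjoin_simple_self E θ
    have hEE' : E ≤ E' := fun x hx => (IntermediateField.adjoin E {θ}).algebraMap_mem ⟨x, hx⟩
    have hE's : E' ∉ s := fun h => hnot (hE.2 h hEE' hθE')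
    have halg : IsAlgebraic E θ := ⟨p, hp.ne_zero, hθ⟩
    simp only [s, Set.mem_setOf_eq, not_forall, not_not] at hE's
    obtain ⟨l, hl, hl2⟩ := hE's
    have : ∃ l' : List E[X], l'.map (aeval θ : E[X] →ₐ[E] Ω) = l := by
      clear hl2
      induction l with
      | nil => exact ⟨[], rfl⟩
      | cons a l ih =>
        obtain ⟨l', hl'⟩ := ih fun x hx => hl x (List.mem_cons_of_mem _ hx)
        have ha : a ∈ (IntermediateField.adjoin E {θ}).toSubalgebra := hl a List.mem_cons_self
        rw [IntermediateField.adjoin_simple_toSubalgebra_of_isAlgebraic halg,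
          Algebra.adjoin_singleton_eq_range_aeval] at ha
        obtain ⟨a', ha'⟩ := ha
        exact ⟨a' :: l', by simpa [hl'] using ha'⟩
    obtain ⟨l', rfl⟩ := this
    refine ⟨l', ?_⟩
    have h0 : aeval θ (1 + lsq l') = 0 := by
      have : (aeval θ : E[X] →ₐ[E] Ω) (lsq l') = -1 := by
        rw [← hl2]
        exact lsq_map ((aeval θ : E[X] →ₐ[E] Ω) : E[X] →+* Ω) l'
      rw [map_add, this]; simp
    have h1 := minpoly.dvd E θ h0
    have h2 : Associated p (minpoly E θ) :=
      ((minpoly.irreducible halg.isIntegral).associated_of_dvd hp (minpoly.dvd E θ hθ)).symm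
    exact h2.dvd.trans h1

variable {K : Type*} [Field K]

lemma FReal.lsq_ne_zero (hK : FReal K) (l : List K) (h : lsq l = 0) : ∀ x ∈ l, x = 0 := by
  intro x hx
  by_contra hx0
  obtain ⟨l1, l2, rfl⟩ := List.append_of_mem hx
  apply hK ((l1 ++ l2).map (x⁻¹ * ·))
  rw [← lsq_mul_sq, lsq_append]
  have : lsq l1 + lsq l2 = - x ^ 2 := by
    rw [lsq_append] at h
    have h2 : lsq (x :: l2) = x ^ 2 + lsq l2 := by simp [lsq]
    rw [h2] at h
    linear_combination h
  rw [this]; field_simp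

lemma lsq_mod (p : K[X]) (l : List K[X]) (h : p ∣ 1 + lsq l) :
    p ∣ 1 + lsq (l.map (fun f => f % p)) := by
  have : p ∣ lsq l - lsq (l.map (fun f => f % p)) := by
    clear h
    induction l with
    | nil => simp [lsq]
    | cons a l ih =>
      have h1 : lsq (a :: l) - lsq ((a :: l).map (fun f => f % p)) =
        (a ^ 2 - (a % p) ^ 2) + (lsq l - lsq (l.map (fun f => f % p))) := by
        simp [lsq]; ring
      rw [h1]
      refine dvd_add ?_ ih
      rw [sq_sub_sq]
      refine Dvd.dvd.mul_left ?_ _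
      exact ⟨a / p, by linear_combination - EuclideanDomain.div_add_mod a p⟩
  have h2 := dvd_sub h this
  have h3 : 1 + lsq l - (lsq l - lsq (l.map (fun f => f % p))) = 1 + lsq (l.map (fun f => f % p)) := by
    ring
  rwa [h3] at h2

lemma lsq_inv (l : List K) : ∃ l', (lsq l)⁻¹ = lsq l' := by
  by_cases h : lsq l = 0
  · exact ⟨[], by rw [h]; simp [lsq]⟩
  refine ⟨l.map ((lsq l)⁻¹ * ·), ?_⟩
  rw [← lsq_mul_sq]; field_simp

lemma lsq_linear (c : K) (l : List K[X]) (hl : ∀ f ∈ l, f.natDegree ≤ 1) :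
    ∃ (la lb : List K) (e : K) , X ^ 2 - C c ∣ lsq l - (C (lsq la + c * lsq lb) + C e * X) := by
  induction l with
  | nil => exact ⟨[], [], 0, by simp [lsq]⟩
  | cons f l ih =>
    obtain ⟨la, lb, e, h⟩ := ih fun g hg => hl g (List.mem_cons_of_mem _ hg)
    have hf := eq_X_add_C_of_natDegree_le_one (hl f List.mem_cons_self)
    refine ⟨f.coeff 0 :: la, f.coeff 1 :: lb, 2 * f.coeff 0 * f.coeff 1 + e, ?_⟩
    have h1 : lsq (f :: l) = f ^ 2 + lsq l := by simp [lsq]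
    have h2 : lsq (f.coeff 0 :: la) = f.coeff 0 ^ 2 + lsq la := by simp [lsq]
    have h3 : lsq (f.coeff 1 :: lb) = f.coeff 1 ^ 2 + lsq lb := by simp [lsq]
    rw [h1, h2, h3]
    obtain ⟨u, hu⟩ := h
    refine ⟨u + C (f.coeff 1 ^ 2), ?_⟩
    have h4 : f ^ 2 = (C (f.coeff 1) * X + C (f.coeff 0)) ^ 2 := by rw [← hf]
    rw [h4]
    simp only [C_add, C_mul, C_pow, map_ofNat] at hu ⊢
    linear_combination hu

lemma MaxReal.neg_lsq (hK : MaxReal K) (c : K) (hc : ¬ IsSquare c) : ∃ l, -c = lsq l := by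
  have hirr : Irreducible (X ^ 2 - C c : K[X]) := by
    rw [irreducible_iff_roots_eq_zero_of_degree_le_three]
    · rw [Multiset.eq_zero_iff_forall_notMem]
      intro a ha
      have := (mem_roots'.1 ha).2
      simp only [IsRoot, eval_sub, eval_pow, eval_X, eval_C] at this
      exact hc ⟨a, by linear_combination - this⟩
    · rw [natDegree_X_pow_sub_C]
    · rw [natDegree_X_pow_sub_C]; omega
  obtain ⟨l, hl⟩ := hK.2 _ hirr (by rw [natDegree_X_pow_sub_C]; omega)
  have hl2 := lsq_mod _ _ hl
  obtain ⟨la, lb, e, h⟩ := lsq_linear c (l.map (fun f => f % (X ^ 2 - C c))) (by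
    intro f hf
    obtain ⟨g, -, rfl⟩ := List.mem_map.1 hf
    have := natDegree_mod_lt g (q := (X ^ 2 - C c : K[X])) (by rw [natDegree_X_pow_sub_C]; omega)
    rw [natDegree_X_pow_sub_C] at this
    omega)
  have h1 := dvd_sub hl2 h
  have h2 : (C e * X + C (1 + lsq la + c * lsq lb) : K[X]) = 0 := by
    apply eq_zero_of_dvd_of_natDegree_lt (p := (X ^ 2 - C c : K[X]))
    · convert h1 using 1
      simp only [C_add, C_mul, C_1]; ring
    · rw [natDegree_X_pow_sub_C]
      exact lt_of_le_of_lt natDegree_linear_le (by omega)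
  have h3 := congrArg (fun f => f.coeff 0) h2
  simp at h3
  have hb0 : lsq lb ≠ 0 := by
    intro h0
    rw [h0] at h3
    apply hK.1 la
    linear_combination h3
  obtain ⟨l1, hl1⟩ := lsq_inv lb
  obtain ⟨l2, hl2⟩ := lsq_mul_lsq (1 :: la) l1
  refine ⟨l2, ?_⟩
  rw [← hl2, ← hl1]
  have : lsq (1 :: la) = 1 + lsq la := by simp [lsq]
  rw [this]; field_simp; linear_combination -h3

lemma MaxReal.isSquare_lsq (hK : MaxReal K) (l : List K) : IsSquare (lsq l) := by
  by_contra h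
  obtain ⟨m, hm⟩ := hK.neg_lsq _ h
  have h0 : lsq l ≠ 0 := by intro h0; rw [h0] at h; exact h ⟨0, by simp⟩
  obtain ⟨i, hi⟩ := lsq_inv l
  obtain ⟨k, hk⟩ := lsq_mul_lsq m i
  apply hK.1 k
  rw [← hk, ← hm, ← hi]; field_simp

lemma isSquare_iff_lsq (c : K) (h : IsSquare c) : c = lsq [h.choose] := by
  have := h.choose_spec
  simp [lsq, pow_two]; exact this

/-- the cone of squares -/
def sqCone (hK : MaxReal K) : RingCone K where
  carrier := {c | IsSquare c}
  mul_mem' := fun ha hb => IsSquare.mul ha hb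
  one_mem' := ⟨1, by simp⟩
  zero_mem' := ⟨0, by simp⟩
  add_mem' := by
    rintro a b ⟨x, rfl⟩ ⟨y, rfl⟩
    have := hK.isSquare_lsq [x, y]
    simpa [lsq, pow_two] using this
  eq_zero_of_mem_of_neg_mem' := by
    rintro a ⟨x, rfl⟩ ⟨y, hy⟩
    have := hK.1.lsq_ne_zero [x, y] (by simp [lsq]; linear_combination -hy) x (by simp)
    simp [this]

theorem MaxReal.polyIVT (hK : MaxReal K) [LinearOrder K] [IsStrictOrderedRing K] : PolyIVT K := by
  have hsq : ∀ l : List K, 0 ≤ lsq l := by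
    intro l
    apply List.sum_nonneg
    intro x hx
    obtain ⟨y, -, rfl⟩ := List.mem_map.1 hx
    exact sq_nonneg y
  have key : ∀ (n : ℕ) (p : K[X]) (a b : K), p.natDegree ≤ n → a < b → p.eval a * p.eval b < 0 →
      ∃ c, a < c ∧ c < b ∧ p.eval c = 0 := by
    intro n
    induction n using Nat.strong_induction_on with
    | _ n ih =>
    intro p a b hn hab hp
    have hp0 : p ≠ 0 := by rintro rfl; simp at hp
    have hnu : ¬ IsUnit p := by
      intro hu
      obtain ⟨r, -, rfl⟩ := isUnit_iff.1 hu
      simp at hp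
      exact absurd hp (not_lt.2 (mul_self_nonneg r))
    by_cases hirr : Irreducible p
    · by_cases hd : p.natDegree = 1
      · have hf := eq_X_add_C_of_natDegree_le_one hd.le
        set u := p.coeff 1
        set v := p.coeff 0
        rw [hf] at hp ⊢
        simp only [eval_add, eval_mul, eval_C, eval_X] at hp ⊢
        have hu : u ≠ 0 := by
          intro h; rw [h] at hp; simp at hp
          exact absurd hp (not_lt.2 (mul_self_nonneg v))
        have h1 : (a - (-v / u)) * (b - (-v / u)) < 0 := by
          have : (u * a + v) * (u * b + v) = u ^ 2 * ((a - (-v / u)) * (b - (-v / u))) := by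
            field_simp; ring
          rw [this] at hp
          by_contra hcon
          exact absurd hp (not_lt.2 (mul_nonneg (sq_nonneg u) (not_lt.1 hcon)))
        refine ⟨-v / u, ?_, ?_, by field_simp; ring⟩
        · rcases mul_neg_iff.1 h1 with ⟨h, h'⟩ | ⟨h, h'⟩ <;> linarith
        · rcases mul_neg_iff.1 h1 with ⟨h, h'⟩ | ⟨h, h'⟩ <;> linarith
      · obtain ⟨l, hl⟩ := hK.2 p hirr hd
        have hdpos : 0 < p.natDegree := hirr.natDegree_pos
        have hl2 := lsq_mod _ _ hl
        set l2 := l.map (fun f => f % p) with hl2def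
        have hdl : (1 + lsq l2).natDegree ≤ 2 * (p.natDegree - 1) := by
          refine natDegree_add_le_of_degree_le (by simp) ?_
          have : ∀ f ∈ l2, f.natDegree ≤ p.natDegree - 1 := by
            intro f hf
            obtain ⟨g, -, rfl⟩ := List.mem_map.1 hf
            have := natDegree_mod_lt g hdpos.ne'
            omega
          clear hl hl2
          clear_value l2
          clear hl2def
          induction l2 with
          | nil => simp [lsq]
          | cons f m ihm =>
            have h1 : lsq (f :: m) = f ^ 2 + lsq m := by simp [lsq]
            rw [h1]
            refine natDegree_add_le_of_degree_le ?_ (ihm fun g hg => this g (List.mem_cons_of_mem _ hg))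
            refine natDegree_pow_le.trans ?_
            have := this f List.mem_cons_self
            gcongr
        have hev : ∀ x, 0 < (1 + lsq l2).eval x := by
          intro x
          have h1 : (lsq l2).eval x = lsq (l2.map (fun f => f.eval x)) :=
            lsq_map (evalRingHom x) l2
          rw [eval_add, eval_one, h1]
          have := hsq (l2.map (fun f => f.eval x))
          linarith
        obtain ⟨q, hq⟩ := hl2
        have hq0 : q ≠ 0 := by
          rintro rfl
          have := hev a
          rw [hq] at this; simp at this
        have hqd : q.natDegree < p.natDegree := by
          rw [hq, natDegree_mul hp0 hq0] at hdl
          omega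
        have ha := hev a
        have hb := hev b
        rw [hq, eval_mul] at ha hb
        have hqs : q.eval a * q.eval b < 0 := by
          have h1 := mul_pos ha hb
          have h2 : (eval a p * eval a q) * (eval b p * eval b q) =
            (eval a p * eval b p) * (eval a q * eval b q) := by ring
          rw [h2] at h1
          exact (neg_iff_neg_of_mul_pos h1).1 hp
        obtain ⟨c, -, -, hc⟩ := ih q.natDegree (by omega) q a b le_rfl hab hqs
        have := hev c
        rw [hq, eval_mul, hc] at this
        simp at this
    · rw [irreducible_iff] at hirr
      push Not at hirr
      obtain ⟨f, g, hfg, hf, hg⟩ := hirr hnu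
      have hf0 : f ≠ 0 := by rintro rfl; simp at hfg; exact hp0 hfg
      have hg0 : g ≠ 0 := by rintro rfl; simp at hfg; exact hp0 hfg
      have hdeg : p.natDegree = f.natDegree + g.natDegree := by rw [hfg, natDegree_mul hf0 hg0]
      have hfd : f.natDegree ≠ 0 := by
        intro h; apply hf
        exact isUnit_iff_degree_eq_zero.2 (by rw [degree_eq_natDegree hf0, h]; rfl)
      have hgd : g.natDegree ≠ 0 := by
        intro h; apply hg
        exact isUnit_iff_degree_eq_zero.2 (by rw [degree_eq_natDegree hg0, h]; rfl)
      have h2 : eval a p * eval b p = (eval a f * eval b f) * (eval a g * eval b g) := by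
        rw [hfg, eval_mul, eval_mul]; ring
      rw [h2] at hp
      rcases mul_neg_iff.1 hp with ⟨_, h⟩ | ⟨h, _⟩
      · obtain ⟨c, h1, h2, h3⟩ := ih g.natDegree (by omega) g a b le_rfl hab h
        exact ⟨c, h1, h2, by rw [hfg, eval_mul, h3, mul_zero]⟩
      · obtain ⟨c, h1, h2, h3⟩ := ih f.natDegree (by omega) f a b le_rfl hab h
        exact ⟨c, h1, h2, by rw [hfg, eval_mul, h3, zero_mul]⟩
  intro p a b
  exact key p.natDegree p a b le_rfl

theorem exists_realClosed {F : Type} [Field F] (hF : FReal F) :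
    ∃ (K : Type) (_ : Field K) (_ : LinearOrder K) (_ : IsStrictOrderedRing K) (_ : F →+* K),
      PolyIVT K := by
  classical
  obtain ⟨K, hKf, j, hK⟩ := exists_maxReal F hF
  let c := sqCone hK
  haveI : HasMemOrNegMem c := ⟨fun a => by
    by_cases h : IsSquare a
    · exact Or.inl h
    · obtain ⟨l, hl⟩ := hK.neg_lsq a h
      right
      have := hK.isSquare_lsq l
      rw [← hl] at this; exact this⟩
  letI : LinearOrder K := LinearOrder.mkOfAddGroupCone c
  haveI : IsOrderedRing K := IsOrderedRing.mkOfCone c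
  haveI : IsStrictOrderedRing K := IsOrderedRing.toIsStrictOrderedRing K
  exact ⟨K, hKf, inferInstance, inferInstance, j, hK.polyIVT⟩

end RealClosure

end RealAlgebra

section AlgebraPart

lemma exists_functional {R W : Type} [CommRing R] [AddCommGroup W] [Module R W] (p : Ideal R)
    [p.IsPrime] (w : W) (h : ∀ t, t ∉ p → t • w ∉ p • (⊤ : Submodule R W)) :
    ∃ f : W →+ FractionRing (R ⧸ p),
      (∀ r x, f (r • x) = algebraMap (R ⧸ p) _ (Ideal.Quotient.mk p r) * f x) ∧ f w ≠ 0 := by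
  let N : Submodule R W := p • ⊤
  let V := LocalizedModule (nonZeroDivisors (R ⧸ p)) (W ⧸ p • (⊤ : Submodule R W))
  let v : V := LocalizedModule.mk (Submodule.Quotient.mk w) 1
  have hv : v ≠ 0 := by
    intro h0
    rw [← LocalizedModule.zero_mk (1 : nonZeroDivisors (R ⧸ p)), LocalizedModule.mk_eq] at h0
    obtain ⟨⟨u, hu⟩, h1⟩ := h0
    obtain ⟨t, rfl⟩ := Ideal.Quotient.mk_surjective u
    refine h t (fun ht => ?_) ?_
    · exact nonZeroDivisors.ne_zero hu (Ideal.Quotient.eq_zero_iff_mem.2 ht)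
    · simp only [smul_zero, one_smul] at h1
      rw [← Submodule.Quotient.mk_eq_zero, Submodule.Quotient.mk_smul]
      exact h1
  have := (Module.forall_dual_apply_eq_zero_iff (FractionRing (R ⧸ p)) v).not.2 hv
  push Not at this
  obtain ⟨g, hg⟩ := this
  refine ⟨⟨⟨fun x => g (LocalizedModule.mk (Submodule.Quotient.mk x) 1), ?_⟩, ?_⟩, ?_, hg⟩
  · rw [Submodule.Quotient.mk_zero, LocalizedModule.zero_mk, map_zero]
  · intro x y
    simp only
    rw [Submodule.Quotient.mk_add, ← map_add]
    congr 1
    rw [LocalizedModule.mk_add_mk]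
    simp
  · intro r x
    change g _ = _ * g _
    rw [← smul_eq_mul, ← map_smul, ← Localization.mk_one_eq_algebraMap, LocalizedModule.mk_smul_mk,
      one_mul, Submodule.Quotient.mk_smul]
    rfl

lemma freal_fractionRing {D : Type} [CommRing D] [IsDomain D]
    (h : ∀ (l : List D) (b : D), b ^ 2 + lsq l = 0 → b = 0) : FReal (FractionRing D) := by
  intro l hl
  have : ∃ b : D, b ≠ 0 ∧ ∃ l' : List D,
      l'.map (algebraMap D (FractionRing D)) = l.map (algebraMap D (FractionRing D) b * ·) := by
    clear hl
    induction l with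
    | nil => exact ⟨1, one_ne_zero, [], rfl⟩
    | cons x l ih =>
      obtain ⟨b, hb, l', hl'⟩ := ih
      obtain ⟨a, c, hc, hac⟩ := IsFractionRing.div_surjective (A := D) x
      have hc0 : algebraMap D (FractionRing D) c ≠ 0 := by
        simpa using nonZeroDivisors.ne_zero hc
      refine ⟨c * b, mul_ne_zero (nonZeroDivisors.ne_zero hc) hb, (b * a) :: l'.map (c * ·), ?_⟩
      have h2 := congrArg (List.map (algebraMap D (FractionRing D) c * ·)) hl'
      simp only [List.map_map, List.map_cons, List.cons.injEq] at h2 ⊢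
      constructor
      · rw [← hac]; simp only [map_mul]; field_simp
      · convert h2 using 2
        · ext y; simp
        · ext y; simp [mul_assoc]
  obtain ⟨b, hb, l', hl'⟩ := this
  apply hb
  apply h l'
  apply IsFractionRing.injective D (FractionRing D)
  rw [map_add, lsq_map, hl', ← lsq_mul_sq, hl]
  simp

/-- abstract functional produced by a real left ideal -/
theorem exists_real_functional {R B : Type} [CommRing R] [IsNoetherianRing R] [Ring B] [StarRing B]
    [Algebra R B] (hstar : ∀ r : R, star (algebraMap R B r) = algebraMap R B r)
    (J : Ideal B) (hJ : ∀ (k : ℕ) (M : Fin k → B), (∑ i, star (M i) * M i) ∈ J → ∀ i, M i ∈ J)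
    (Q : B) (hQ : Q ∉ J) :
    ∃ (F : Type) (_ : Field F) (φ : R →+* F) (f : B →+ F), FReal F ∧
      (∀ r x, f (r • x) = φ r * f x) ∧ (∀ x ∈ J, f x = 0) ∧ f Q ≠ 0 := by
  classical
  let J' : Submodule R B := J.restrictScalars R
  have hJ' : ∀ x, x ∈ J' ↔ x ∈ J := fun x => Iff.rfl
  have hsJ : ∀ (r : R) (x : B), x ∈ J → r • x ∈ J := fun r x hx => J'.smul_mem r hx
  have hss : ∀ (r : R) (x : B), star (r • x) = r • star x := by
    intro r x
    rw [Algebra.smul_def, star_mul, hstar, ← Algebra.commutes, ← Algebra.smul_def]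
  -- prime annihilator
  have hprime : ∃ s : R, ∃ p : Ideal R, p.IsPrime ∧ ∀ r, r ∈ p ↔ r • (s • Q) ∈ J := by
    let q : B ⧸ J' := Submodule.Quotient.mk Q
    have hq : q ≠ 0 := by
      intro h
      exact hQ ((Submodule.Quotient.mk_eq_zero J').1 h)
    let qq : (Submodule.span R {q}) := ⟨q, Submodule.mem_span_singleton_self q⟩
    have hqq : qq ≠ 0 := fun h => hq (congrArg Subtype.val h)
    obtain ⟨p, hp, -⟩ := exists_le_isAssociatedPrime_of_isNoetherianRing R qq hqq
    obtain ⟨hpp, ⟨y, hy⟩, hpe⟩ := isAssociatedPrime_iff.1 hp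
    obtain ⟨s, rfl⟩ := Submodule.mem_span_singleton.1 hy
    refine ⟨s, p, hpp, fun r => ?_⟩
    rw [hpe, Submodule.mem_colon_singleton, Submodule.mem_bot, Subtype.ext_iff]
    change r • s • q = 0 ↔ _
    rw [← hJ', ← Submodule.Quotient.mk_eq_zero, Submodule.Quotient.mk_smul,
      Submodule.Quotient.mk_smul]
  obtain ⟨s, p, hp, hpm⟩ := hprime
  set Q' := s • Q with hQ'
  have hpreal : ∀ l : List R, lsq l ∈ p → ∀ x ∈ l, x ∈ p := by
    intro l hl x hx
    obtain ⟨i, rfl⟩ := List.get_of_mem hx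
    rw [hpm]
    refine hJ l.length (fun i => l.get i • Q') ?_ i
    have h1 : ∀ i : Fin l.length, star (l.get i • Q') * (l.get i • Q') =
        star Q' * ((l.get i) ^ 2 • Q') := by
      intro i
      rw [hss, smul_mul_smul_comm, ← pow_two]
      exact (mul_smul_comm _ _ _).symm
    rw [Finset.sum_congr rfl (fun i _ => h1 i), ← Finset.mul_sum, ← Finset.sum_smul]
    have h2 : ∑ i : Fin l.length, (l.get i) ^ 2 = lsq l := by
      rw [lsq, ← Fin.sum_univ_fun_getElem]
      rfl
    rw [h2]
    exact J.mul_mem_left _ ((hpm _).1 hl)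
  have hfr : FReal (FractionRing (R ⧸ p)) := by
    apply freal_fractionRing
    intro l b h
    have hl : ∃ l' : List R, l'.map (Ideal.Quotient.mk p) = l :=
      List.map_surjective_iff.2 Ideal.Quotient.mk_surjective l
    obtain ⟨l', rfl⟩ := hl
    obtain ⟨b', rfl⟩ := Ideal.Quotient.mk_surjective b
    rw [Ideal.Quotient.eq_zero_iff_mem]
    refine hpreal (b' :: l') ?_ b' List.mem_cons_self
    rw [← Ideal.Quotient.eq_zero_iff_mem, ← h, ← lsq_map, ← map_pow, ← map_add]
    simp [lsq]
  obtain ⟨f, hf1, hf2⟩ := exists_functional p (Submodule.Quotient.mk Q' : B ⧸ J') (by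
    intro t ht hmem
    apply ht
    rw [hpm]
    have key : ∀ z ∈ p • (⊤ : Submodule R (B ⧸ J')), ∃ x : B, Submodule.Quotient.mk x = z ∧
        star x * (t • Q') ∈ J := by
      intro z hz
      induction hz using Submodule.smul_induction_on' with
      | smul r hr n hn =>
        obtain ⟨x, rfl⟩ := Submodule.Quotient.mk_surjective _ n
        refine ⟨r • x, rfl, ?_⟩
        rw [hss, smul_mul_assoc, ← mul_smul_comm, smul_comm]
        exact J.mul_mem_left _ (hsJ _ _ ((hpm r).1 hr))
      | add x hx y hy ihx ihy =>
        obtain ⟨x', rfl, hx'⟩ := ihx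
        obtain ⟨y', rfl, hy'⟩ := ihy
        refine ⟨x' + y', rfl, ?_⟩
        rw [star_add, add_mul]
        exact J.add_mem hx' hy'
    obtain ⟨x, hx1, hx2⟩ := key _ hmem
    have hd : x - t • Q' ∈ J := (Submodule.Quotient.eq J').1 hx1
    have hx3 : star x * x ∈ J := by
      have : star x * x = star x * (x - t • Q') + star x * (t • Q') := by rw [mul_sub]; abel
      rw [this]
      exact J.add_mem (J.mul_mem_left _ hd) hx2
    have hx4 : x ∈ J := hJ 1 (fun _ => x) (by simpa using hx3) 0
    have := J.sub_mem hx4 hd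
    rwa [sub_sub_cancel] at this)
  refine ⟨FractionRing (R ⧸ p), inferInstance, (algebraMap (R ⧸ p) _).comp (Ideal.Quotient.mk p),
    f.comp J'.mkQ.toAddMonoidHom, hfr, ?_, ?_, ?_⟩
  · intro r x
    exact hf1 r (J'.mkQ x)
  · intro x hx
    have : J'.mkQ x = 0 := (Submodule.Quotient.mk_eq_zero J').2 hx
    change f (J'.mkQ x) = 0
    rw [this, map_zero]
  · intro h
    apply hf2
    have h1 := hf1 s (J'.mkQ Q)
    have h2 : f (J'.mkQ Q) = 0 := h
    rw [h2, mul_zero] at h1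
    exact h1

lemma artin_lang_fintype {σ : Type} [Fintype σ] {K : Type} [Field K] [LinearOrder K]
    [IsStrictOrderedRing K] (hK : PolyIVT K) (j : ℝ →+* K)
    (S : Finset (MvPolynomial σ ℝ)) (b : σ → K) :
    ∃ a : σ → ℝ, ∀ s ∈ S, SignType.sign (MvPolynomial.eval₂ j b s) =
      SignType.sign (MvPolynomial.eval a s) := by
  classical
  let e := Fintype.equivFin σ
  obtain ⟨a, ha⟩ := artin_lang hK j (Fintype.card σ)
    (S.image (fun s => MvPolynomial.rename e s)) (b ∘ e.symm)
  refine ⟨a ∘ e, fun s hs => ?_⟩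
  have := ha _ (Finset.mem_image_of_mem _ hs)
  rw [MvPolynomial.eval₂_rename, MvPolynomial.eval_rename] at this
  rw [← this]
  congr 2
  ext x; simp

end AlgebraPart

section ConcretePart

/-- the four real coordinates of a quaternion -/
def qcomp (k : Fin 4) (q : Quaternion ℝ) : ℝ := ![q.re, q.imI, q.imJ, q.imK] k

/-- the four quaternion units -/
def qunit (k : Fin 4) : Quaternion ℝ := ![1, qI, qJ, qK] k

lemma quat_expand (q : Quaternion ℝ) : q = ∑ k, ((qcomp k q : ℝ) : Quaternion ℝ) * qunit k := by
  rw [Fin.sum_univ_four]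
  ext <;> simp [qcomp, qunit, Quaternion.re_mul, Quaternion.imI_mul, Quaternion.imJ_mul,
    Quaternion.imK_mul] <;> simp [qI, qJ, qK]

/-- real coordinates of a point -/
def qcoords {d : ℕ} (a : Fin d → Quaternion ℝ) (x : Fin d × Fin 4) : ℝ := qcomp x.2 (a x.1)

lemma const_mem_HPoly {d : ℕ} (c : Quaternion ℝ) : (fun _ : Fin d → Quaternion ℝ => c) ∈ HPoly d :=
  Subring.subset_closure (Or.inl ⟨c, rfl⟩)

lemma re_eq_half (q : Quaternion ℝ) :
    ((q.re : ℝ) : Quaternion ℝ) = ((2⁻¹ : ℝ) : Quaternion ℝ) * (q + star q) := by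
  rw [Quaternion.coe_mul_eq_smul]
  ext <;> simp
  ring

lemma qcomp_eq_re (k : Fin 4) (q : Quaternion ℝ) : qcomp k q = (star (qunit k) * q).re := by
  fin_cases k <;> simp [qcomp, qunit, Quaternion.re_mul] <;> simp [qI, qJ, qK]

lemma qcoord_mem_HPoly {d : ℕ} (i : Fin d) (k : Fin 4) :
    (fun a : Fin d → Quaternion ℝ => ((qcomp k (a i) : ℝ) : Quaternion ℝ)) ∈ HPoly d := by
  have h1 : (fun a : Fin d → Quaternion ℝ => a i) ∈ HPoly d :=
    Subring.subset_closure (Or.inr ⟨i, rfl⟩)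
  have h2 : (fun a : Fin d → Quaternion ℝ => star (qunit k) * a i) ∈ HPoly d :=
    mul_mem (const_mem_HPoly (star (qunit k))) h1
  have h3 := mul_mem (const_mem_HPoly ((2⁻¹ : ℝ) : Quaternion ℝ)) (add_mem h2 (star_mem_HPoly h2))
  convert h3 using 1
  funext a
  rw [qcomp_eq_re, re_eq_half]
  rfl

/-- real polynomials as functions -/
noncomputable def polyFun (d : ℕ) :
    MvPolynomial (Fin d × Fin 4) ℝ →+* ((Fin d → Quaternion ℝ) → Quaternion ℝ) :=
  RingHom.pi (fun a => (algebraMap ℝ (Quaternion ℝ)).comp (MvPolynomial.eval (qcoords a)))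

lemma polyFun_apply {d : ℕ} (r : MvPolynomial (Fin d × Fin 4) ℝ) (a : Fin d → Quaternion ℝ) :
    polyFun d r a = ((MvPolynomial.eval (qcoords a) r : ℝ) : Quaternion ℝ) := rfl

lemma polyFun_mem {d : ℕ} (r : MvPolynomial (Fin d × Fin 4) ℝ) : polyFun d r ∈ HPoly d := by
  induction r using MvPolynomial.induction_on with
  | C c =>
    convert const_mem_HPoly (c : Quaternion ℝ) using 1
    funext a
    rw [polyFun_apply, MvPolynomial.eval_C]
  | add p q hp hq => rw [map_add]; exact add_mem hp hq
  | mul_X p i hp =>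
    rw [map_mul]
    refine mul_mem hp ?_
    convert qcoord_mem_HPoly i.1 i.2 using 1
    funext a
    rw [polyFun_apply, MvPolynomial.eval_X]
    rfl

/-- real polynomials inside the quaternionic polynomial functions -/
noncomputable def polyHom (d : ℕ) : MvPolynomial (Fin d × Fin 4) ℝ →+* HPoly d :=
  (polyFun d).codRestrict (HPoly d) polyFun_mem

lemma polyHom_apply {d : ℕ} (r : MvPolynomial (Fin d × Fin 4) ℝ) (a : Fin d → Quaternion ℝ) :
    (polyHom d r : (Fin d → Quaternion ℝ) → Quaternion ℝ) a =
      ((MvPolynomial.eval (qcoords a) r : ℝ) : Quaternion ℝ) := rfl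

noncomputable instance polyAlgebra (d : ℕ) : Algebra (MvPolynomial (Fin d × Fin 4) ℝ) (HPoly d) :=
  (polyHom d).toAlgebra' (by
    intro r f
    apply Subtype.ext
    funext a
    change (polyHom d r : (Fin d → Quaternion ℝ) → Quaternion ℝ) a * f.1 a = f.1 a * (polyHom d r).1 a
    rw [polyHom_apply]
    exact Quaternion.coe_commutes _ _)

lemma polyHom_star {d : ℕ} (r : MvPolynomial (Fin d × Fin 4) ℝ) :
    star (polyHom d r) = polyHom d r := by
  apply Subtype.ext
  funext a
  exact Quaternion.star_coe _

/-- constant unit functions -/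
def unitFun (d : ℕ) (k : Fin 4) : HPoly d := ⟨fun _ => qunit k, const_mem_HPoly _⟩

lemma exists_lift {d : ℕ} (f : HPoly d) : ∃ c : Fin 4 → MvPolynomial (Fin d × Fin 4) ℝ,
    ∀ a, (f : (Fin d → Quaternion ℝ) → Quaternion ℝ) a =
      ∑ k, ((MvPolynomial.eval (qcoords a) (c k) : ℝ) : Quaternion ℝ) * qunit k := by
  suffices H : ∀ g ∈ HPoly d, ∃ c : Fin 4 → MvPolynomial (Fin d × Fin 4) ℝ,
      ∀ a, ∀ k, qcomp k (g a) = MvPolynomial.eval (qcoords a) (c k) by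
    obtain ⟨c, hc⟩ := H f.1 f.2
    refine ⟨c, fun a => ?_⟩
    rw [quat_expand (f.1 a)]
    simp only [hc]
  intro g hg
  induction hg using Subring.closure_induction with
  | mem g hg =>
    rcases hg with ⟨c, rfl⟩ | ⟨i, rfl⟩
    · exact ⟨fun k => MvPolynomial.C (qcomp k c), fun a k => by simp⟩
    · exact ⟨fun k => MvPolynomial.X (i, k), fun a k => by simp [qcoords]⟩
  | one =>
    exact ⟨fun k => MvPolynomial.C (qcomp k 1), fun a k => by simp⟩
  | zero =>
    exact ⟨fun k => MvPolynomial.C (qcomp k 0), fun a k => by simp⟩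
  | neg x hx ihx =>
    obtain ⟨c, hc⟩ := ihx
    refine ⟨fun k => - c k, fun a k => ?_⟩
    rw [map_neg, ← hc]
    fin_cases k <;> simp [qcomp]
  | add x y hx hy ihx ihy =>
    obtain ⟨c, hc⟩ := ihx
    obtain ⟨c', hc'⟩ := ihy
    refine ⟨fun k => c k + c' k, fun a k => ?_⟩
    rw [map_add, ← hc, ← hc']
    fin_cases k <;> simp [qcomp]
  | mul x y hx hy ihx ihy =>
    obtain ⟨c, hc⟩ := ihx
    obtain ⟨c', hc'⟩ := ihy
    refine ⟨![c 0 * c' 0 - c 1 * c' 1 - c 2 * c' 2 - c 3 * c' 3,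
      c 0 * c' 1 + c 1 * c' 0 + c 2 * c' 3 - c 3 * c' 2,
      c 0 * c' 2 - c 1 * c' 3 + c 2 * c' 0 + c 3 * c' 1,
      c 0 * c' 3 + c 1 * c' 2 - c 2 * c' 1 + c 3 * c' 0], fun a k => ?_⟩
    fin_cases k <;> simp [← hc, ← hc'] <;> simp [qcomp]

/-- chosen lifts -/
noncomputable def lift4 {d : ℕ} (f : HPoly d) : Fin 4 → MvPolynomial (Fin d × Fin 4) ℝ :=
  (exists_lift f).choose

lemma lift4_spec {d : ℕ} (f : HPoly d) (a : Fin d → Quaternion ℝ) :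
    (f : (Fin d → Quaternion ℝ) → Quaternion ℝ) a =
      ∑ k, ((MvPolynomial.eval (qcoords a) (lift4 f k) : ℝ) : Quaternion ℝ) * qunit k :=
  (exists_lift f).choose_spec a

lemma lift4_sum {d : ℕ} (f : HPoly d) : f = ∑ k, lift4 f k • unitFun d k := by
  apply Subtype.ext
  funext a
  rw [lift4_spec f a, Fin.sum_univ_four, Fin.sum_univ_four]
  rfl

lemma mat_sum {d n : ℕ} (M : Matrix (Fin n) (Fin n) (HPoly d)) :
    M = ∑ t, ∑ s, ∑ k, lift4 (M t s) k • Matrix.single t s (unitFun d k) := by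
  conv_lhs => rw [Matrix.matrix_eq_sum_single M]
  refine Finset.sum_congr rfl fun t _ => Finset.sum_congr rfl fun s _ => ?_
  conv_lhs => rw [lift4_sum (M t s)]
  simp only [Matrix.smul_single]
  exact map_sum (Matrix.singleAddMonoidHom (α := HPoly d) t s) _ _

/-- index type of the variables -/
abbrev VarIdx (d n : ℕ) : Type := (Fin d × Fin 4) ⊕ (Fin n × Fin n × Fin 4)

/-- the bilinear form attached to a matrix -/
noncomputable def formPoly {d n : ℕ} (M : Matrix (Fin n) (Fin n) (HPoly d)) :
    MvPolynomial (VarIdx d n) ℝ :=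
  ∑ t, ∑ s, ∑ k, MvPolynomial.rename Sum.inl (lift4 (M t s) k) * MvPolynomial.X (Sum.inr (t, s, k))

lemma formPoly_eval₂ {d n : ℕ} {K : Type} [Field K] (φ : MvPolynomial (Fin d × Fin 4) ℝ →+* K)
    (f : Matrix (Fin n) (Fin n) (HPoly d) →+ K)
    (hf : ∀ (r : MvPolynomial (Fin d × Fin 4) ℝ) x, f (r • x) = φ r * f x)
    (M : Matrix (Fin n) (Fin n) (HPoly d)) :
    MvPolynomial.eval₂ (φ.comp MvPolynomial.C)
      (Sum.elim (fun x => φ (MvPolynomial.X x))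
        (fun y => f (Matrix.single y.1 y.2.1 (unitFun d y.2.2)))) (formPoly M) = f M := by
  conv_rhs => rw [mat_sum M]
  have hφ : ∀ r, MvPolynomial.eval₂ (φ.comp MvPolynomial.C)
      (fun x => φ (MvPolynomial.X x)) r = φ r := by
    intro r
    have : MvPolynomial.eval₂Hom (φ.comp MvPolynomial.C) (fun x => φ (MvPolynomial.X x)) = φ := by
      apply MvPolynomial.ringHom_ext <;> intros <;> simp
    exact congrArg (fun g : MvPolynomial (Fin d × Fin 4) ℝ →+* K => g r) this
  simp only [formPoly, MvPolynomial.eval₂_sum, MvPolynomial.eval₂_mul, MvPolynomial.eval₂_X,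
    MvPolynomial.eval₂_rename, Sum.elim_comp_inl, Sum.elim_inr, hφ, map_sum, hf]

/-- the vector with prescribed real functionals -/
def dualVec {n : ℕ} (c : Fin n × Fin n × Fin 4 → ℝ) (t s : Fin n) : Quaternion ℝ :=
  ⟨c (t, s, 0), - c (t, s, 1), - c (t, s, 2), - c (t, s, 3)⟩

lemma dualVec_re {n : ℕ} (c : Fin n × Fin n × Fin 4 → ℝ) (t s : Fin n) (k : Fin 4) :
    (qunit k * dualVec c t s).re = c (t, s, k) := by
  fin_cases k
  · change (1 * dualVec c t s).re = c (t, s, 0)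
    rw [one_mul]; rfl
  · change (qI * dualVec c t s).re = c (t, s, 1)
    rw [Quaternion.re_mul]; simp [qI, dualVec]
  · change (qJ * dualVec c t s).re = c (t, s, 2)
    rw [Quaternion.re_mul]; simp [qJ, dualVec]
  · change (qK * dualVec c t s).re = c (t, s, 3)
    rw [Quaternion.re_mul]; simp [qK, dualVec]

lemma re_sum {ι : Type} (s : Finset ι) (g : ι → Quaternion ℝ) :
    (∑ i ∈ s, g i).re = ∑ i ∈ s, (g i).re := by
  classical
  induction s using Finset.induction_on with
  | empty => exact Quaternion.re_zero
  | insert a s ha ih => rw [Finset.sum_insert ha, Finset.sum_insert ha, Quaternion.re_add, ih]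

lemma formPoly_eval {d n : ℕ} (a : Fin d → Quaternion ℝ) (c : Fin n × Fin n × Fin 4 → ℝ)
    (M : Matrix (Fin n) (Fin n) (HPoly d)) :
    MvPolynomial.eval (Sum.elim (qcoords a) c) (formPoly M) =
      ∑ t, ((evalMatH a M).mulVec (dualVec c t) t).re := by
  simp only [formPoly, map_sum, map_mul, MvPolynomial.eval_X, MvPolynomial.eval_rename,
    Sum.elim_comp_inl, Sum.elim_inr]
  refine Finset.sum_congr rfl fun t _ => ?_
  rw [Matrix.mulVec, dotProduct, re_sum]
  refine Finset.sum_congr rfl fun s _ => ?_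
  have : evalMatH a M t s = _ := lift4_spec (M t s) a
  rw [this, Finset.sum_mul, re_sum]
  refine Finset.sum_congr rfl fun k _ => ?_
  rw [mul_assoc, Quaternion.coe_mul_eq_smul, Quaternion.re_smul, dualVec_re, smul_eq_mul]

lemma evalMatH_mul {d n : ℕ} (a : Fin d → Quaternion ℝ) (M N : Matrix (Fin n) (Fin n) (HPoly d)) :
    evalMatH a (M * N) = evalMatH a M * evalMatH a N := by
  let g : HPoly d →+* Quaternion ℝ := (Pi.evalRingHom _ a).comp (HPoly d).subtype
  exact Matrix.map_mul (L := M) (M := N) (f := g)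

lemma evalMatH_single {d n : ℕ} (a : Fin d → Quaternion ℝ) (t r : Fin n) (k : Fin 4) :
    evalMatH a (Matrix.single t r (unitFun d k)) = Matrix.single t r (qunit k) := by
  let g : HPoly d →+* Quaternion ℝ := (Pi.evalRingHom _ a).comp (HPoly d).subtype
  exact Matrix.map_single t r (unitFun d k) g

lemma quat_eq_zero_of_re (q : Quaternion ℝ) (h : ∀ k, (qunit k * q).re = 0) : q = 0 := by
  have h0 : (1 * q).re = 0 := h 0
  rw [one_mul] at h0
  have h1 := h 1
  have h2 := h 2
  have h3 := h 3
  rw [Quaternion.re_mul] at h1 h2 h3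
  simp [qunit, qI] at h1
  simp [qunit, qJ] at h2
  simp [qunit, qK] at h3
  ext
  · exact h0
  · exact h1
  · exact h2
  · exact h3

lemma hard_direction (d n m : ℕ)
    (P : Fin m → Matrix (Fin n) (Fin n) (HPoly d)) (Q : Matrix (Fin n) (Fin n) (HPoly d))
    (H : ∀ (a : Fin d → Quaternion ℝ) (v : Fin n → Quaternion ℝ),
        (∀ i, (evalMatH a (P i)).mulVec v = 0) → (evalMatH a Q).mulVec v = 0)
    (J : Ideal (Matrix (Fin n) (Fin n) (HPoly d)))
    (hJ : J.IsRealLeftIdealH) (hP : ∀ i, P i ∈ J) : Q ∈ J := by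
  classical
  by_contra hQ
  obtain ⟨F, _, φ, f, hF, hf, hf0, hfQ⟩ := exists_real_functional
    (R := MvPolynomial (Fin d × Fin 4) ℝ) (B := Matrix (Fin n) (Fin n) (HPoly d))
    (by
      intro r
      rw [Matrix.algebraMap_eq_diagonal, Matrix.star_eq_conjTranspose,
        Matrix.diagonal_conjTranspose]
      congr 1
      funext i
      exact polyHom_star r) J hJ Q hQ
  obtain ⟨K, _, _, _, e, hK⟩ := exists_realClosed hF
  let φ' : MvPolynomial (Fin d × Fin 4) ℝ →+* K := e.comp φ
  let f' : Matrix (Fin n) (Fin n) (HPoly d) →+ K := e.toAddMonoidHom.comp f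
  have hf' : ∀ (r : MvPolynomial (Fin d × Fin 4) ℝ) x, f' (r • x) = φ' r * f' x := by
    intro r x
    change e (f (r • x)) = e (φ r) * e (f x)
    rw [hf, map_mul]
  let T : Finset (MvPolynomial (VarIdx d n) ℝ) := insert (formPoly Q)
    ((Finset.univ : Finset (Fin n × Fin n × Fin 4 × Fin m)).image
      (fun z => formPoly (Matrix.single z.1 z.2.1 (unitFun d z.2.2.1) * P z.2.2.2)))
  obtain ⟨x, hx⟩ := artin_lang_fintype hK (φ'.comp MvPolynomial.C) T
    (Sum.elim (fun x => φ' (MvPolynomial.X x))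
        (fun y => f' (Matrix.single y.1 y.2.1 (unitFun d y.2.2))))
  let a : Fin d → Quaternion ℝ := fun i =>
    ⟨x (Sum.inl (i, 0)), x (Sum.inl (i, 1)), x (Sum.inl (i, 2)), x (Sum.inl (i, 3))⟩
  let c : Fin n × Fin n × Fin 4 → ℝ := fun y => x (Sum.inr y)
  have hxe : x = Sum.elim (qcoords a) c := by
    funext z
    rcases z with ⟨i, k⟩ | y
    · fin_cases k <;> rfl
    · rfl
  have hPv : ∀ t i, (evalMatH a (P i)).mulVec (dualVec c t) = 0 := by
    intro t i
    funext r
    apply quat_eq_zero_of_re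
    intro k
    have h1 := hx (formPoly (Matrix.single t r (unitFun d k) * P i))
      (Finset.mem_insert_of_mem (Finset.mem_image.2 ⟨(t, r, k, i), Finset.mem_univ _, rfl⟩))
    rw [formPoly_eval₂ φ' f' hf', hxe, formPoly_eval] at h1
    have h2 : f' (Matrix.single t r (unitFun d k) * P i) = 0 := by
      change e (f _) = 0
      rw [hf0 _ (J.mul_mem_left _ (hP i)), map_zero]
    rw [h2, sign_zero, eq_comm, sign_eq_zero_iff, Finset.sum_eq_single t] at h1
    · rw [evalMatH_mul, evalMatH_single, ← Matrix.mulVec_mulVec, Matrix.single_mulVec] at h1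
      simpa using h1
    · intro t' _ hne
      rw [evalMatH_mul, evalMatH_single, ← Matrix.mulVec_mulVec, Matrix.single_mulVec]
      rw [Function.update_of_ne hne]
      exact Quaternion.re_zero
    · simp
  have hQv : ∀ t, (evalMatH a Q).mulVec (dualVec c t) = 0 := fun t => H a _ (hPv t)
  have h1 := hx (formPoly Q) (Finset.mem_insert_self _ _)
  rw [formPoly_eval₂ φ' f' hf', hxe, formPoly_eval] at h1
  have h2 : ∑ t, ((evalMatH a Q).mulVec (dualVec c t) t).re = 0 := by
    refine Finset.sum_eq_zero fun t _ => ?_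
    rw [hQv t]; rfl
  rw [h2, sign_zero, sign_eq_zero_iff] at h1
  exact hfQ ((map_eq_zero e).1 h1)

lemma evalMatH_conjTranspose {d n : ℕ} (a : Fin d → Quaternion ℝ)
    (M : Matrix (Fin n) (Fin n) (HPoly d)) : evalMatH a (Mᴴ) = (evalMatH a M)ᴴ := rfl

/-- evaluation as a ring homomorphism -/
noncomputable def evalMatHom {d n : ℕ} (a : Fin d → Quaternion ℝ) :
    Matrix (Fin n) (Fin n) (HPoly d) →+* Matrix (Fin n) (Fin n) (Quaternion ℝ) :=
  ((Pi.evalRingHom _ a).comp (HPoly d).subtype).mapMatrix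

lemma evalMatHom_apply {d n : ℕ} (a : Fin d → Quaternion ℝ)
    (M : Matrix (Fin n) (Fin n) (HPoly d)) : evalMatHom a M = evalMatH a M := rfl

lemma easy_direction (d n m : ℕ)
    (P : Fin m → Matrix (Fin n) (Fin n) (HPoly d)) (Q : Matrix (Fin n) (Fin n) (HPoly d))
    (H : ∀ I : Ideal (Matrix (Fin n) (Fin n) (HPoly d)),
        I.IsRealLeftIdealH → (∀ i, P i ∈ I) → Q ∈ I)
    (a : Fin d → Quaternion ℝ) (v : Fin n → Quaternion ℝ)
    (hv : ∀ i, (evalMatH a (P i)).mulVec v = 0) : (evalMatH a Q).mulVec v = 0 := by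
  let I : Ideal (Matrix (Fin n) (Fin n) (HPoly d)) :=
    { carrier := {M | (evalMatHom a M).mulVec v = 0}
      add_mem' := by
        intro x y hx hy
        change (evalMatHom a (x + y)).mulVec v = 0
        rw [map_add, Matrix.add_mulVec]
        rw [show (evalMatHom a x).mulVec v = 0 from hx, show (evalMatHom a y).mulVec v = 0 from hy,
          add_zero]
      zero_mem' := by
        change (evalMatHom a 0).mulVec v = 0
        rw [map_zero, Matrix.zero_mulVec]
      smul_mem' := by
        intro c x hx
        change (evalMatHom a (c * x)).mulVec v = 0
        rw [map_mul, ← Matrix.mulVec_mulVec, show (evalMatHom a x).mulVec v = 0 from hx,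
          Matrix.mulVec_zero] }
  refine H I ?_ hv
  intro k M hM
  have h1 : (evalMatHom a (∑ i, (M i)ᴴ * M i)).mulVec v = 0 := hM
  have h2 : ∑ i, ∑ r, Quaternion.normSq ((evalMatHom a (M i)).mulVec v r) = 0 := by
    have h3 : (star v ⬝ᵥ (evalMatHom a (∑ i, (M i)ᴴ * M i)).mulVec v).re = 0 := by
      rw [h1, dotProduct_zero]; exact Quaternion.re_zero
    rw [← h3, map_sum, Matrix.sum_mulVec, dotProduct_sum, re_sum]
    refine Finset.sum_congr rfl fun i _ => ?_
    rw [map_mul, evalMatHom_apply a ((M i)ᴴ), evalMatH_conjTranspose, ← evalMatHom_apply,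
      ← Matrix.mulVec_mulVec, Matrix.dotProduct_mulVec, ← Matrix.star_mulVec, dotProduct, re_sum]
    refine Finset.sum_congr rfl fun r _ => ?_
    rw [Quaternion.normSq_def']
    simp [Quaternion.re_mul]
    ring
  intro i
  change (evalMatHom a (M i)).mulVec v = 0
  funext r
  have h4 := (Finset.sum_eq_zero_iff_of_nonneg (fun i _ => Finset.sum_nonneg
    (fun r _ => Quaternion.normSq_nonneg))).1 h2 i (Finset.mem_univ _)
  have h5 := (Finset.sum_eq_zero_iff_of_nonneg (fun r _ => Quaternion.normSq_nonneg)).1 h4 r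
    (Finset.mem_univ _)
  exact Quaternion.normSq_eq_zero.1 h5

end ConcretePart

/-- **Second Matricial Quaternionic Nullstellensatz (Theorem F).** -/
theorem matricial_quaternionic_nullstellensatz (d n m : ℕ)
    (P : Fin m → Matrix (Fin n) (Fin n) (HPoly d)) (Q : Matrix (Fin n) (Fin n) (HPoly d)) :
    (∀ (a : Fin d → ℍ) (v : Fin n → ℍ),
        (∀ i, (evalMatH a (P i)).mulVec v = 0) → (evalMatH a Q).mulVec v = 0) ↔
      (∀ I : Ideal (Matrix (Fin n) (Fin n) (HPoly d)),
        I.IsRealLeftIdealH → (∀ i, P i ∈ I) → Q ∈ I) := by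
  exact ⟨fun H J hJ hP => hard_direction d n m P Q H J hJ hP,
    fun H a v hv => easy_direction d n m P Q H a v hv⟩
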